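/- The topological pair (𝒞(ℝ²), 𝒞(ℝ²) \ ℒ), where ℒ is the set of lattices, is homeomorphic to the suspension of the pair (𝒞¹, 𝒵¹), where 𝒞¹ is the set of closed subgroups of ℝ² of shortest nonzero vector of norm 1 and 𝒵¹ ⊂ 𝒞¹ is the subset of subgroups isomorphic to ℤ. -/

import Mathlib

open scoped Pointwise

noncomputable section

abbrev Euc (n : ℕ) := EuclideanSpace ℝ (Fin n)

/-- A point of the Chabauty space of ℝⁿ: a closed additive subgroup. -/
def ChabautyPoint (n : ℕ) : Type := {Γ : AddSubgroup (Euc n) // IsClosed (Γ : Set (Euc n))}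

/-- The Chabauty (Fell) topology on the space of closed subgroups of ℝⁿ. -/
instance chabautyTopology (n : ℕ) : TopologicalSpace (ChabautyPoint n) :=
  TopologicalSpace.generateFrom
    ({S | ∃ K : Set (Euc n), IsCompact K ∧
        S = {Γ : ChabautyPoint n | ((Γ.1 : Set (Euc n)) ∩ K) = ∅}} ∪
     {S | ∃ U : Set (Euc n), IsOpen U ∧
        S = {Γ : ChabautyPoint n | ((Γ.1 : Set (Euc n)) ∩ U).Nonempty}})

/-- A lattice in ℝ²: a discrete subgroup spanning ℝ² (equivalently, isomorphic to ℤ²). -/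
def IsLattice (Γ : AddSubgroup (Euc 2)) : Prop :=
  DiscreteTopology Γ ∧ Submodule.span ℝ (Γ : Set (Euc 2)) = ⊤

/-- Γ has covolume one: it is generated by two vectors with determinant ±1. -/
def UnitCovolume (Γ : AddSubgroup (Euc 2)) : Prop :=
  ∃ v w : Euc 2, AddSubgroup.closure {v, w} = Γ ∧ |v 0 * w 1 - v 1 * w 0| = 1

/-- 𝒞₁ : the closure of the set of unit-covolume lattices in the Chabauty space of ℝ². -/
def covolOne : Set (ChabautyPoint 2) :=
  closure {Γ : ChabautyPoint 2 | IsLattice Γ.1 ∧ UnitCovolume Γ.1}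

/-- 𝒞¹ : the set of closed subgroups of ℝ² whose shortest nonzero vector has norm 1. -/
def normOne : Set (ChabautyPoint 2) :=
  {Γ : ChabautyPoint 2 | ∃ x ∈ Γ.1, ‖x‖ = 1 ∧ ∀ y ∈ Γ.1, y ≠ 0 → 1 ≤ ‖y‖}

/-- Relation defining the suspension: collapse X × {0} and X × {1} each to a point. -/
def suspRel (X : Type*) (a b : X × Set.Icc (0 : ℝ) 1) : Prop :=
  a = b ∨ ((a.2 : ℝ) = 0 ∧ (b.2 : ℝ) = 0) ∨ ((a.2 : ℝ) = 1 ∧ (b.2 : ℝ) = 1)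

/-- The suspension of X. -/
def Susp (X : Type*) [TopologicalSpace X] : Type _ := Quot (suspRel X)

instance (X : Type*) [TopologicalSpace X] : TopologicalSpace (Susp X) :=
  instTopologicalSpaceQuot

/-- The suspension of a subset A ⊆ X, inside the suspension of X. -/
def suspSet {X : Type*} [TopologicalSpace X] (A : Set X) : Set (Susp X) :=
  {z : Susp X | ∃ x ∈ A, ∃ t : Set.Icc (0 : ℝ) 1, z = Quot.mk (suspRel X) (x, t)}

/-- ℒ : the set of lattices in the Chabauty space of ℝ². -/
def latticeSet : Set (ChabautyPoint 2) := {Γ : ChabautyPoint 2 | IsLattice Γ.1}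

/-- 𝒵¹ ⊆ 𝒞¹ : the subgroups of 𝒞¹ isomorphic to ℤ (rank one, i.e. not spanning ℝ²). -/
def rankOneNormOne : Set normOne :=
  {Γ : normOne | Submodule.span ℝ (Γ.1.1 : Set (Euc 2)) ≠ ⊤}

open Set Filter Topology

/-! ### Coordinates along and across a unit vector -/

/-- The component of `z` along `v`. -/
def along (v z : Euc 2) : ℝ := z 0 * v 0 + z 1 * v 1

/-- The component of `z` along the image of `v` under the rotation by a right angle. -/
def across (v z : Euc 2) : ℝ := z 1 * v 0 - z 0 * v 1

/-- The vector with components `p` along `v` and `q` across `v`. -/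
def frame (v : Euc 2) (p q : ℝ) : Euc 2 := !₂[p * v 0 - q * v 1, p * v 1 + q * v 0]

/-- The increasing homeomorphism `[0, 1) → [0, ∞)`. -/
def rat (x : ℝ) : ℝ := x / (1 - x)

/-- The distance to `ℝ v` of a vector of norm `rat y` whose component along `v` is `s * rat x`. -/
def height (s x y : ℝ) : ℝ := √(rat y ^ 2 - (s * rat x) ^ 2)

/-- Parameters of a closed subgroup of the plane: the direction `v` of a shortest vector, the twist
`s`, and the compactified lengths `x ≤ y` of a shortest and of a second shortest vector. -/
structure Admissible (v : Euc 2) (s x y : ℝ) : Prop where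
  unit : v 0 ^ 2 + v 1 ^ 2 = 1
  neg_half_le : -(1 / 2) ≤ s
  le_half : s ≤ 1 / 2
  nonneg : 0 ≤ x
  le : x ≤ y
  le_one : y ≤ 1

/-- Membership in the closed subgroup with parameters `v`, `s`, `x`, `y`; a length `0` stands for a
line, a length `1` for no vector at all. -/
def InGroup (v : Euc 2) (s x y : ℝ) (z : Euc 2) : Prop :=
  ∃ n m : ℤ, (y = 1 → n = 0) ∧ (x = 1 → m = 0) ∧ (0 < y → across v z = n * height s x y) ∧
    (0 < x → along v z = (m + n * s) * rat x)

lemma norm_sq_eq (z : Euc 2) : ‖z‖ ^ 2 = z 0 ^ 2 + z 1 ^ 2 := by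
  simp [EuclideanSpace.real_norm_sq_eq]

lemma along_add (v z z' : Euc 2) : along v (z + z') = along v z + along v z' := by
  simp [along]; ring

lemma across_add (v z z' : Euc 2) : across v (z + z') = across v z + across v z' := by
  simp [across]; ring

lemma along_neg (v z : Euc 2) : along v (-z) = -along v z := by
  simp [along]; ring

lemma across_neg (v z : Euc 2) : across v (-z) = -across v z := by
  simp [across]; ring

@[simp] lemma along_zero (v : Euc 2) : along v 0 = 0 := by simp [along]

@[simp] lemma across_zero (v : Euc 2) : across v 0 = 0 := by simp [across]

lemma along_neg_left (v z : Euc 2) : along (-v) z = -along v z := by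
  simp [along]; ring

lemma across_neg_left (v z : Euc 2) : across (-v) z = -across v z := by
  simp [across]; ring

lemma along_smul (v z : Euc 2) (r : ℝ) : along v (r • z) = r * along v z := by
  simp [along]; ring

lemma across_smul (v z : Euc 2) (r : ℝ) : across v (r • z) = r * across v z := by
  simp [across]; ring

section Frame

variable {v : Euc 2} (hv : v 0 ^ 2 + v 1 ^ 2 = 1)
include hv

lemma along_frame (p q : ℝ) : along v (frame v p q) = p := by
  simp only [along, frame, PiLp.toLp_apply, Matrix.cons_val_zero, Matrix.cons_val_one]
  linear_combination p * hv

lemma across_frame (p q : ℝ) : across v (frame v p q) = q := by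
  simp only [across, frame, PiLp.toLp_apply, Matrix.cons_val_zero, Matrix.cons_val_one]
  linear_combination q * hv

lemma frame_along_across (z : Euc 2) : frame v (along v z) (across v z) = z := by
  ext i
  fin_cases i
  · simp [along, across, frame]; linear_combination z 0 * hv
  · simp [along, across, frame]; linear_combination z 1 * hv

lemma norm_sq_eq_along_across (z : Euc 2) : ‖z‖ ^ 2 = along v z ^ 2 + across v z ^ 2 := by
  rw [norm_sq_eq, along, across]
  linear_combination (-(z 0) ^ 2 - (z 1) ^ 2) * hv

lemma norm_frame_sq (p q : ℝ) : ‖frame v p q‖ ^ 2 = p ^ 2 + q ^ 2 := by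
  rw [norm_sq_eq_along_across hv, along_frame hv, across_frame hv]

lemma eq_zero_of_along_across {z : Euc 2} (h : along v z = 0) (h' : across v z = 0) : z = 0 := by
  rw [← frame_along_across hv z, h, h']
  ext i
  fin_cases i <;> simp [frame]

lemma along_self : along v v = 1 := by
  rw [along]; linear_combination hv

end Frame

lemma across_self (v : Euc 2) : across v v = 0 := by
  rw [across]; ring

lemma continuous_along : Continuous fun p : Euc 2 × Euc 2 => along p.1 p.2 := by
  unfold along; fun_prop

lemma continuous_across : Continuous fun p : Euc 2 × Euc 2 => across p.1 p.2 := by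
  unfold across; fun_prop

lemma rat_zero : rat 0 = 0 := by simp [rat]

lemma rat_half : rat (1 / 2) = 1 := by norm_num [rat]

lemma rat_le_rat {x y : ℝ} (hxy : x ≤ y) (hy : y < 1) : rat x ≤ rat y := by
  unfold rat
  rw [div_le_div_iff₀ (by linarith) (by linarith)]
  nlinarith

lemma rat_lt_rat {x y : ℝ} (hxy : x < y) (hy : y < 1) : rat x < rat y := by
  unfold rat
  rw [div_lt_div_iff₀ (by linarith) (by linarith)]
  nlinarith

lemma rat_pos {x : ℝ} (h : 0 < x) (h1 : x < 1) : 0 < rat x := div_pos h (by linarith)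

lemma rat_nonneg {x : ℝ} (h : 0 ≤ x) (h1 : x ≤ 1) : 0 ≤ rat x := div_nonneg h (by linarith)

lemma continuousAt_rat {x : ℝ} (h : x < 1) : ContinuousAt rat x := by
  unfold rat
  exact continuousAt_id.div (by fun_prop) (by linarith)

/-- The inverse of `rat`. -/
lemma exists_rat_eq {a : ℝ} (h : 0 ≤ a) : ∃ x, 0 ≤ x ∧ x < 1 ∧ rat x = a := by
  refine ⟨a / (1 + a), by positivity, ?_, ?_⟩
  · rw [div_lt_one (by linarith)]; linarith
  · unfold rat; field_simp; simp

namespace Admissible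

variable {v : Euc 2} {s x y : ℝ} (h : Admissible v s x y)
include h

lemma sq_le : s ^ 2 ≤ 1 / 4 := by nlinarith [h.neg_half_le, h.le_half]

lemma y_nonneg : 0 ≤ y := h.nonneg.trans h.le

lemma height_sq (hy : y < 1) : height s x y ^ 2 = rat y ^ 2 - (s * rat x) ^ 2 := by
  apply Real.sq_sqrt
  have h1 := rat_le_rat h.le hy
  have h2 := rat_nonneg h.nonneg (by linarith [h.le])
  have h3 : (s * rat x) ^ 2 ≤ 1 / 4 * rat x ^ 2 := by
    rw [mul_pow]; exact mul_le_mul_of_nonneg_right h.sq_le (sq_nonneg _)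
  nlinarith

lemma half_rat_le_height (hy : y < 1) : rat y / 2 ≤ height s x y := by
  have h1 := rat_le_rat h.le hy
  have h2 := rat_nonneg h.nonneg (by linarith [h.le])
  have h3 : (s * rat x) ^ 2 ≤ 1 / 4 * rat x ^ 2 := by
    rw [mul_pow]; exact mul_le_mul_of_nonneg_right h.sq_le (sq_nonneg _)
  apply Real.le_sqrt_of_sq_le
  nlinarith

lemma height_pos (hy0 : 0 < y) (hy : y < 1) : 0 < height s x y := by
  have := h.half_rat_le_height hy
  have := rat_pos hy0 hy
  linarith

end Admissible

lemma height_nonneg (s x y : ℝ) : 0 ≤ height s x y := Real.sqrt_nonneg _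

lemma height_zero_left {s y : ℝ} (hy : 0 ≤ y) (h1 : y ≤ 1) : height s 0 y = rat y := by
  simp [height, rat_zero, Real.sqrt_sq (rat_nonneg hy h1)]

lemma height_neg (s x y : ℝ) : height (-s) x y = height s x y := by
  simp [height]

/-! ### The subgroup with given parameters -/

lemma inGroup_zero (v : Euc 2) (s x y : ℝ) : InGroup v s x y 0 := ⟨0, 0, by simp⟩

lemma InGroup.add {v : Euc 2} {s x y : ℝ} {z z' : Euc 2} (h : InGroup v s x y z)
    (h' : InGroup v s x y z') : InGroup v s x y (z + z') := by
  obtain ⟨n, m, h1, h2, h3, h4⟩ := h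
  obtain ⟨n', m', h1', h2', h3', h4'⟩ := h'
  refine ⟨n + n', m + m', fun e => by rw [h1 e, h1' e, add_zero],
    fun e => by rw [h2 e, h2' e, add_zero], fun e => ?_, fun e => ?_⟩
  · rw [across_add, h3 e, h3' e]; push_cast; ring
  · rw [along_add, h4 e, h4' e]; push_cast; ring

lemma InGroup.neg {v : Euc 2} {s x y : ℝ} {z : Euc 2} (h : InGroup v s x y z) :
    InGroup v s x y (-z) := by
  obtain ⟨n, m, h1, h2, h3, h4⟩ := h
  refine ⟨-n, -m, fun e => by rw [h1 e, neg_zero], fun e => by rw [h2 e, neg_zero],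
    fun e => ?_, fun e => ?_⟩
  · rw [across_neg, h3 e]; push_cast; ring
  · rw [along_neg, h4 e]; push_cast; ring

/-- A vector off the line `ℝ v` is at least as long as the second parameter. -/
lemma InGroup.rat_le_norm_of_across_ne {v : Euc 2} {s x y : ℝ} {z : Euc 2}
    (h : InGroup v s x y z) (ha : Admissible v s x y) (hy : y < 1) (hz : across v z ≠ 0) :
    rat y ≤ ‖z‖ := by
  rcases ha.y_nonneg.eq_or_lt with hy0 | hy0
  · rw [← hy0, rat_zero]; exact norm_nonneg z
  obtain ⟨n, m, -, -, h3, h4⟩ := h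
  have h3 := h3 hy0
  have hn : n ≠ 0 := by rintro rfl; simp at h3; exact hz h3
  have hn1 : (1 : ℝ) ≤ (n : ℝ) ^ 2 := by
    have : 1 ≤ n ^ 2 := by have := Int.one_le_abs hn; nlinarith [sq_abs n, abs_nonneg n]
    exact_mod_cast this
  have hb := rat_pos hy0 hy
  apply le_of_sq_le_sq _ (norm_nonneg z)
  rw [norm_sq_eq_along_across ha.unit, h3, mul_pow, ha.height_sq hy]
  rcases ha.nonneg.eq_or_lt with hx0 | hx0
  · rw [← hx0, rat_zero]
    nlinarith [sq_nonneg (along v z), sq_nonneg (rat y)]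
  rw [h4 hx0]
  have hab := rat_le_rat ha.le hy
  have ha0 := rat_pos hx0 (ha.le.trans_lt hy)
  have key : (1 : ℝ) ≤ (m : ℝ) ^ 2 - |(m : ℝ)| * |(n : ℝ)| + (n : ℝ) ^ 2 := by
    have : 1 ≤ |m| ^ 2 - |m| * |n| + |n| ^ 2 := by
      have h1 := Int.one_le_abs hn
      have h2 := abs_nonneg m
      by_cases hc : |m| ≤ |n|
      · rcases h2.eq_or_lt with h0 | h0
        · rw [← h0]; nlinarith
        · nlinarith
      · push Not at hc; nlinarith
    have : (1 : ℝ) ≤ |(m : ℝ)| ^ 2 - |(m : ℝ)| * |(n : ℝ)| + |(n : ℝ)| ^ 2 := by exact_mod_cast this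
    simpa using this
  have hs : -(|(m : ℝ)| * |(n : ℝ)|) ≤ 2 * (m * n * s) := by
    have h1 : |(m : ℝ) * n * s| ≤ |(m : ℝ)| * |(n : ℝ)| * (1 / 2) := by
      rw [abs_mul, abs_mul]
      exact mul_le_mul_of_nonneg_left (abs_le.2 ⟨ha.neg_half_le, ha.le_half⟩) (by positivity)
    linarith [neg_abs_le ((m : ℝ) * n * s)]
  have hsq : rat x ^ 2 ≤ rat y ^ 2 := by nlinarith
  have e : ((m + n * s) * rat x) ^ 2 + (n : ℝ) ^ 2 * (rat y ^ 2 - (s * rat x) ^ 2) =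
      ((m : ℝ) ^ 2 + 2 * (m * n * s)) * rat x ^ 2 + (n : ℝ) ^ 2 * rat y ^ 2 := by ring
  rw [e]
  have hx2 : 0 < rat x ^ 2 := by positivity
  have h5 : ((m : ℝ) ^ 2 - |(m : ℝ)| * |(n : ℝ)|) * rat x ^ 2 ≤
      ((m : ℝ) ^ 2 + 2 * (m * n * s)) * rat x ^ 2 :=
    mul_le_mul_of_nonneg_right (by linarith) hx2.le
  rcases le_total 0 ((m : ℝ) ^ 2 - |(m : ℝ)| * |(n : ℝ)|) with hc | hc
  · nlinarith [mul_nonneg hc hx2.le, sq_nonneg (rat y)]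
  · nlinarith [mul_nonneg (neg_nonneg.2 hc) (sub_nonneg.2 hsq), sq_nonneg (rat y)]

lemma one_le_abs_of_ne_zero {m : ℤ} (h : m ≠ 0) : (1 : ℝ) ≤ |(m : ℝ)| := by
  exact_mod_cast Int.one_le_abs h

/-- A nonzero vector is at least as long as the first parameter. -/
lemma InGroup.rat_le_norm {v : Euc 2} {s x y : ℝ} {z : Euc 2}
    (h : InGroup v s x y z) (ha : Admissible v s x y) (hx : x < 1) (hz : z ≠ 0) :
    rat x ≤ ‖z‖ := by
  rcases ha.nonneg.eq_or_lt with hx0 | hx0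
  · rw [← hx0, rat_zero]; exact norm_nonneg z
  have hy0 := hx0.trans_le ha.le
  by_cases hc : across v z = 0
  · obtain ⟨n, m, h1, -, h3, h4⟩ := h
    have hn : n = 0 := by
      rcases ha.le_one.eq_or_lt with hy | hy
      · exact h1 hy
      · have := h3 hy0
        rw [hc, eq_comm, mul_eq_zero] at this
        simpa [(ha.height_pos hy0 hy).ne'] using this
    have h4 := h4 hx0
    subst hn
    simp only [Int.cast_zero, zero_mul, add_zero] at h4
    have hm : m ≠ 0 := by
      rintro rfl
      exact hz (eq_zero_of_along_across ha.unit (by simpa using h4) hc)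
    have hp := rat_pos hx0 hx
    apply le_of_sq_le_sq _ (norm_nonneg z)
    rw [norm_sq_eq_along_across ha.unit, hc, h4]
    have := one_le_abs_of_ne_zero hm
    rw [mul_pow, ← sq_abs (m : ℝ)]
    have : 1 ≤ |(m : ℝ)| ^ 2 := by nlinarith
    nlinarith [sq_nonneg (rat x)]
  · rcases ha.le_one.eq_or_lt with hy | hy
    · obtain ⟨n, m, h1, -, h3, -⟩ := h
      exact absurd (by simpa [h1 hy] using h3 hy0) hc
    · exact (rat_le_rat ha.le hy).trans (h.rat_le_norm_of_across_ne ha hy hc)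

lemma Admissible.rat_smul_mem {v : Euc 2} {s x y : ℝ} (ha : Admissible v s x y) (hx : x < 1) :
    InGroup v s x y (rat x • v) := by
  refine ⟨0, 1, by simp, fun e => absurd e hx.ne, fun _ => ?_, fun _ => ?_⟩
  · simp [across_smul, across_self]
  · simp [along_smul, along_self ha.unit]

lemma Admissible.smul_mem {v : Euc 2} {s y : ℝ} (r : ℝ) :
    InGroup v s 0 y (r • v) := by
  refine ⟨0, 0, by simp, by simp, fun _ => ?_, by simp⟩
  simp [across_smul, across_self]

/-- A second shortest vector. -/
lemma Admissible.second_mem {v : Euc 2} {s x y : ℝ} (ha : Admissible v s x y) (hy : y < 1) :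
    InGroup v s x y (frame v (s * rat x) (height s x y)) := by
  refine ⟨1, 0, fun e => absurd e hy.ne, by simp, fun _ => ?_, fun _ => ?_⟩
  · simp [across_frame ha.unit]
  · simp [along_frame ha.unit]

lemma Admissible.norm_second {v : Euc 2} {s x y : ℝ} (ha : Admissible v s x y) (hy : y < 1) :
    ‖frame v (s * rat x) (height s x y)‖ = rat y := by
  have h := norm_frame_sq ha.unit (s * rat x) (height s x y)
  rw [ha.height_sq hy] at h
  have := rat_nonneg ha.y_nonneg ha.le_one
  rw [← sq_eq_sq₀ (norm_nonneg _) this]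
  linarith

lemma norm_eq_one_of {v : Euc 2} (hv : v 0 ^ 2 + v 1 ^ 2 = 1) : ‖v‖ = 1 := by
  rw [← norm_sq_eq] at hv
  nlinarith [norm_nonneg v]

/-- The first parameter is the first successive minimum. -/
lemma Admissible.exists_ne_zero_iff {v : Euc 2} {s x y : ℝ} (ha : Admissible v s x y) {r : ℝ}
    (hr : 0 < r) : (∃ z, InGroup v s x y z ∧ z ≠ 0 ∧ ‖z‖ ≤ r) ↔ x < 1 ∧ rat x ≤ r := by
  have hv := norm_eq_one_of ha.unit
  have hv0 : v ≠ 0 := by rintro rfl; simp at hv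
  constructor
  · rintro ⟨z, hz, hz0, hzr⟩
    have hx : x < 1 := by
      by_contra hx
      have hx : x = 1 := by linarith [ha.le, ha.le_one]
      have hy : y = 1 := by linarith [ha.le, ha.le_one]
      obtain ⟨n, m, h1, h2, h3, h4⟩ := hz
      have h3 := h3 (by linarith)
      have h4 := h4 (by linarith)
      simp only [h1 hy, h2 hx, Int.cast_zero, zero_mul, add_zero] at h3 h4
      exact hz0 (eq_zero_of_along_across ha.unit h4 h3)
    exact ⟨hx, (hz.rat_le_norm ha hx hz0).trans hzr⟩
  · rintro ⟨hx, hxr⟩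
    rcases ha.nonneg.eq_or_lt with hx0 | hx0
    · subst hx0
      refine ⟨r • v, smul_mem r, smul_ne_zero hr.ne' hv0, ?_⟩
      rw [norm_smul, hv, mul_one, Real.norm_of_nonneg hr.le]
    · have hp := rat_pos hx0 hx
      refine ⟨rat x • v, ha.rat_smul_mem hx, smul_ne_zero hp.ne' hv0, ?_⟩
      rwa [norm_smul, hv, mul_one, Real.norm_of_nonneg hp.le]

/-- The second parameter is the second successive minimum. -/
lemma Admissible.exists_independent_iff {v : Euc 2} {s x y : ℝ} (ha : Admissible v s x y) {r : ℝ}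
    (hr : 0 < r) : (∃ z z', InGroup v s x y z ∧ InGroup v s x y z' ∧ across z z' ≠ 0 ∧
      ‖z‖ ≤ r ∧ ‖z'‖ ≤ r) ↔ y < 1 ∧ rat y ≤ r := by
  have hv := norm_eq_one_of ha.unit
  constructor
  · rintro ⟨z, z', hz, hz', hzz, hzr, hzr'⟩
    obtain ⟨w, hw, hwr, hw0⟩ : ∃ w, InGroup v s x y w ∧ ‖w‖ ≤ r ∧ across v w ≠ 0 := by
      by_contra! hc
      have h1 := hc z hz hzr
      have h2 := hc z' hz' hzr'
      rw [← frame_along_across ha.unit z, ← frame_along_across ha.unit z', h1, h2] at hzz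
      apply hzz
      simp [across, frame]
      ring
    have hy : y < 1 := by
      by_contra hy
      have hy : y = 1 := by linarith [ha.le_one]
      obtain ⟨n, m, h1, h2, h3, h4⟩ := hw
      exact hw0 (by simpa [h1 hy] using h3 (by linarith))
    exact ⟨hy, (hw.rat_le_norm_of_across_ne ha hy hw0).trans hwr⟩
  · rintro ⟨hy, hyr⟩
    have hx : x < 1 := ha.le.trans_lt hy
    obtain ⟨p, hp, hpm, hpr⟩ : ∃ p > 0, InGroup v s x y (p • v) ∧ p ≤ r := by
      rcases ha.nonneg.eq_or_lt with hx0 | hx0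
      · subst hx0
        exact ⟨r, hr, smul_mem r, le_rfl⟩
      · exact ⟨rat x, rat_pos hx0 hx, ha.rat_smul_mem hx, (rat_le_rat ha.le hy).trans hyr⟩
    obtain ⟨w, hw, hw0, hwr⟩ : ∃ w, InGroup v s x y w ∧ across v w ≠ 0 ∧ ‖w‖ ≤ r := by
      rcases ha.y_nonneg.eq_or_lt with hy0 | hy0
      · refine ⟨frame v 0 r, ⟨0, 0, by simp, by simp, ?_, ?_⟩, ?_, ?_⟩
        · intro h; linarith
        · intro h; linarith [ha.le]
        · rw [across_frame ha.unit]; exact hr.ne'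
        · apply le_of_sq_le_sq _ hr.le
          rw [norm_frame_sq ha.unit]; simp
      · refine ⟨_, ha.second_mem hy, ?_, (ha.norm_second hy).le.trans hyr⟩
        rw [across_frame ha.unit]; exact (ha.height_pos hy0 hy).ne'
    refine ⟨p • v, w, hpm, hw, ?_, ?_, hwr⟩
    · have : across (p • v) w = p * across v w := by simp [across]; ring
      rw [this]; exact mul_ne_zero hp.ne' hw0
    · rwa [norm_smul, hv, mul_one, Real.norm_of_nonneg hp.le]
/-! ### The parameters determined by the subgroup -/

lemma eq_of_rat_le_iff {x x' : ℝ} (h0 : 0 ≤ x) (h1 : x ≤ 1) (h0' : 0 ≤ x') (h1' : x' ≤ 1)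
    (h : ∀ r > 0, (x < 1 ∧ rat x ≤ r) ↔ (x' < 1 ∧ rat x' ≤ r)) : x = x' := by
  wlog hlt : x < x' generalizing x x'
  · rcases (not_lt.1 hlt).eq_or_lt with e | e
    · exact e.symm
    · exact (this h0' h1' h0 h1 (fun r hr => (h r hr).symm) e).symm
  exfalso
  have hx : x < 1 := by linarith
  have hn := rat_nonneg h0 h1
  have hx' : x' < 1 := ((h (rat x + 1) (by linarith)).1 ⟨hx, by linarith⟩).1
  have hlt' := rat_lt_rat hlt hx'
  have := ((h ((rat x + rat x') / 2) (by linarith)).1 ⟨hx, by linarith⟩).2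
  linarith

lemma Admissible.lengths_eq {v v' : Euc 2} {s s' x x' y y' : ℝ} (ha : Admissible v s x y)
    (ha' : Admissible v' s' x' y') (h : ∀ z, InGroup v s x y z ↔ InGroup v' s' x' y' z) :
    x = x' ∧ y = y' := by
  constructor
  · refine eq_of_rat_le_iff ha.nonneg (ha.le.trans ha.le_one) ha'.nonneg
      (ha'.le.trans ha'.le_one) fun r hr => ?_
    rw [← ha.exists_ne_zero_iff hr, ← ha'.exists_ne_zero_iff hr]
    simp only [h]
  · refine eq_of_rat_le_iff ha.y_nonneg ha.le_one ha'.y_nonneg ha'.le_one fun r hr => ?_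
    rw [← ha.exists_independent_iff hr, ← ha'.exists_independent_iff hr]
    simp only [h]

lemma InGroup.neg_left {v : Euc 2} {s x y : ℝ} {z : Euc 2} (h : InGroup v s x y z) :
    InGroup (-v) s x y z := by
  obtain ⟨n, m, h1, h2, h3, h4⟩ := h
  refine ⟨-n, -m, fun e => by rw [h1 e, neg_zero], fun e => by rw [h2 e, neg_zero],
    fun e => ?_, fun e => ?_⟩
  · rw [across_neg_left, h3 e]; push_cast; ring
  · rw [along_neg_left, h4 e]; push_cast; ring

lemma inGroup_neg_left_iff {v : Euc 2} {s x y : ℝ} {z : Euc 2} :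
    InGroup (-v) s x y z ↔ InGroup v s x y z :=
  ⟨fun h => by simpa using h.neg_left, InGroup.neg_left⟩

/-- Changing the twist `1 / 2` into `-1 / 2` does not change the subgroup. -/
lemma InGroup.flip_twist {v : Euc 2} {s x y : ℝ} {z : Euc 2} (hs : s = 1 / 2 ∨ s = -(1 / 2))
    (hx : x ≠ 1) (h : InGroup v s x y z) : InGroup v (-s) x y z := by
  obtain ⟨n, m, h1, -, h3, h4⟩ := h
  rcases hs with rfl | rfl
  · refine ⟨n, m + n, h1, fun e => absurd e hx, fun e => by rw [height_neg, h3 e],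
      fun e => ?_⟩
    rw [h4 e]; push_cast; ring
  · refine ⟨n, m - n, h1, fun e => absurd e hx, fun e => by rw [height_neg, h3 e],
      fun e => ?_⟩
    rw [h4 e]; push_cast; ring

lemma InGroup.change_twist {v : Euc 2} {s s' x y : ℝ} {z : Euc 2} (hxy : x = 0 ∨ y = 1)
    (h : InGroup v s x y z) : InGroup v s' x y z := by
  obtain ⟨n, m, h1, h2, h3, h4⟩ := h
  refine ⟨n, m, h1, h2, fun e => ?_, fun e => ?_⟩
  · rcases hxy with rfl | rfl
    · simpa [height, rat_zero] using h3 e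
    · simpa [h1 rfl] using h3 e
  · rcases hxy with rfl | rfl
    · exact absurd e (lt_irrefl _)
    · simpa [h1 rfl] using h4 e

/-- Two twists give the same subgroup when they agree up to an integer. -/
def SameTwist (s s' : ℝ) : Prop := s' = s ∨ ((s = 1 / 2 ∨ s = -(1 / 2)) ∧ s' = -s)

lemma Admissible.direction_eq {v v' : Euc 2} {s s' x y : ℝ} (ha : Admissible v s x y)
    (ha' : Admissible v' s' x y) (hxy : x < y)
    (h : ∀ z, InGroup v s x y z ↔ InGroup v' s' x y z) : v' = v ∨ v' = -v := by
  have hv := norm_eq_one_of ha.unit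
  have hv' := norm_eq_one_of ha'.unit
  have hy0 : 0 < y := ha.nonneg.trans_lt hxy
  have hx : x < 1 := hxy.trans_le ha.le_one
  obtain ⟨r, hr, hrm, hry⟩ : ∃ r > 0, InGroup v' s' x y (r • v') ∧ (y < 1 → r < rat y) := by
    rcases ha.nonneg.eq_or_lt with hx0 | hx0
    · subst hx0
      by_cases hy : y < 1
      · have := rat_pos hy0 hy
        exact ⟨rat y / 2, by linarith, smul_mem _, fun _ => by linarith⟩
      · exact ⟨1, one_pos, smul_mem _, fun e => absurd e hy⟩
    · exact ⟨rat x, rat_pos hx0 hx, ha'.rat_smul_mem hx, fun hy => rat_lt_rat hxy hy⟩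
  have hac : across v (r • v') = 0 := by
    have hm := (h _).2 hrm
    rcases ha.le_one.eq_or_lt with hy | hy
    · obtain ⟨n, m, h1, -, h3, -⟩ := hm
      simpa [h1 hy] using h3 hy0
    · by_contra hc
      have h1 := hm.rat_le_norm_of_across_ne ha hy hc
      rw [norm_smul, hv', mul_one, Real.norm_of_nonneg hr.le] at h1
      linarith [hry hy]
  rw [across_smul, mul_eq_zero, or_iff_right hr.ne'] at hac
  have hal : along v v' ^ 2 = 1 := by
    have := norm_sq_eq_along_across ha.unit v'
    rw [hv', hac] at this
    linarith
  rcases sq_eq_one_iff.1 hal with e | e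
  · left
    rw [← frame_along_across ha.unit v', hac, e]
    ext i
    fin_cases i <;> simp [frame]
  · right
    rw [← frame_along_across ha.unit v', hac, e]
    ext i
    fin_cases i <;> simp [frame]

lemma Admissible.sameTwist {v : Euc 2} {s s' x y : ℝ} (ha : Admissible v s x y)
    (ha' : Admissible v s' x y) (hx : 0 < x) (hy : y < 1)
    (h : ∀ z, InGroup v s x y z ↔ InGroup v s' x y z) : SameTwist s s' := by
  have hy0 : 0 < y := hx.trans_le ha.le
  have hp := ha.height_pos hy0 hy
  have hp' := ha'.height_pos hy0 hy
  have hr := rat_pos hx (ha.le.trans_lt hy)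
  obtain ⟨n, m, -, -, h3, h4⟩ := (h _).2 (ha'.second_mem hy)
  obtain ⟨n', m', -, -, h3', -⟩ := (h _).1 (ha.second_mem hy)
  have h3 := h3 hy0
  have h3' := h3' hy0
  have h4 := h4 hx
  rw [across_frame ha.unit] at h3 h3'
  rw [along_frame ha.unit] at h4
  have h4 : s' = m + n * s := mul_right_cancel₀ hr.ne' h4
  have hnn : n * n' = 1 := by
    have : (n : ℝ) * n' = 1 := by
      rw [h3, ← mul_assoc] at h3'
      have : height s x y * (1 - n' * n) = 0 := by linarith
      rw [mul_eq_zero, or_iff_right hp.ne'] at this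
      linarith
    exact_mod_cast this
  have hn : n = 1 := by
    have hn0 : 0 < n := by
      have : (0 : ℝ) < n := by
        rw [h3] at hp'
        exact pos_of_mul_pos_left hp' hp.le
      exact_mod_cast this
    rcases Int.mul_eq_one_iff_eq_one_or_neg_one.1 hnn with e | e <;> omega
  subst hn
  simp only [Int.cast_one, one_mul] at h4
  have b1 := ha.neg_half_le
  have b2 := ha.le_half
  have b3 := ha'.neg_half_le
  have b4 := ha'.le_half
  have hm1 : m ≤ 1 := by
    have : (m : ℝ) ≤ 1 := by linarith
    exact_mod_cast this
  have hm2 : -1 ≤ m := by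
    have : (-1 : ℝ) ≤ m := by linarith
    exact_mod_cast this
  obtain rfl | rfl | rfl : m = -1 ∨ m = 0 ∨ m = 1 := by omega
  · right
    push_cast at h4
    exact ⟨Or.inl (by linarith), by linarith⟩
  · left; simpa using h4
  · right
    push_cast at h4
    exact ⟨Or.inr (by linarith), by linarith⟩

/-- When the two lengths differ, the fibres of the parametrization do not depend on them, except
that the twist is irrelevant at the extreme values. -/
lemma Admissible.forall_inGroup_iff {v v' : Euc 2} {s s' x y : ℝ} (ha : Admissible v s x y)
    (ha' : Admissible v' s' x y) (hxy : x < y) :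
    (∀ z, InGroup v s x y z ↔ InGroup v' s' x y z) ↔
      (v' = v ∨ v' = -v) ∧ (x = 0 ∨ y = 1 ∨ SameTwist s s') := by
  constructor
  · intro h
    have hd := ha.direction_eq ha' hxy h
    refine ⟨hd, ?_⟩
    rcases ha.nonneg.eq_or_lt with hx0 | hx0
    · exact Or.inl hx0.symm
    rcases ha.le_one.eq_or_lt with hy | hy
    · exact Or.inr (Or.inl hy)
    refine Or.inr (Or.inr ?_)
    rcases hd with rfl | rfl
    · exact ha.sameTwist ha' hx0 hy h
    · refine ha.sameTwist ⟨ha.unit, ha'.neg_half_le, ha'.le_half, ha'.nonneg, ha'.le,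
        ha'.le_one⟩ hx0 hy fun z => (h z).trans inGroup_neg_left_iff
  · rintro ⟨hd, ht⟩ z
    have hv : InGroup v' s' x y z ↔ InGroup v s' x y z := by
      rcases hd with rfl | rfl
      · rfl
      · exact inGroup_neg_left_iff
    rw [hv]
    have hx1 : x ≠ 1 := (hxy.trans_le ha.le_one).ne
    rcases ht with ht | ht | rfl | ⟨hs, rfl⟩
    · exact ⟨InGroup.change_twist (Or.inl ht), InGroup.change_twist (Or.inl ht)⟩
    · exact ⟨InGroup.change_twist (Or.inr ht), InGroup.change_twist (Or.inr ht)⟩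
    · rfl
    · refine ⟨InGroup.flip_twist hs hx1, fun h => ?_⟩
      have := InGroup.flip_twist (by rcases hs with rfl | rfl <;> norm_num) hx1 h
      rwa [neg_neg] at this

/-- Subgroups whose two lengths are equal are rescalings of subgroups with lengths `1`. -/
lemma inGroup_diagonal_iff {v : Euc 2} {s x : ℝ} (hx : 0 < x) (hx1 : x < 1) (z : Euc 2) :
    InGroup v s x x z ↔ InGroup v s (1 / 2) (1 / 2) ((rat x)⁻¹ • z) := by
  have hr := rat_pos hx hx1
  have hh : height s x x = rat x * height s (1 / 2) (1 / 2) := by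
    rw [height, height, rat_half, show rat x ^ 2 - (s * rat x) ^ 2 =
      rat x ^ 2 * (1 ^ 2 - (s * 1) ^ 2) by ring, Real.sqrt_mul (sq_nonneg _),
      Real.sqrt_sq hr.le]
  have h2 : (0 : ℝ) < 1 / 2 := by norm_num
  have h3 : (1 / 2 : ℝ) ≠ 1 := by norm_num
  unfold InGroup
  simp only [hx, hx1.ne, h2, h3, hh, across_smul, along_smul, false_implies, true_and,
    forall_const, rat_half]
  refine exists_congr fun n => exists_congr fun m => and_congr ?_ ?_
  · rw [inv_mul_eq_iff_eq_mul₀ hr.ne', mul_left_comm]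
  · rw [inv_mul_eq_iff_eq_mul₀ hr.ne', mul_one, mul_comm]

/-! ### Continuity of the parametrization -/

lemma exists_eventually_eq_int {α : Type*} {l : Filter α} [l.NeBot] {n : α → ℤ} {g r : α → ℝ}
    {g₀ r₀ : ℝ} (hr : Tendsto r l (𝓝 r₀)) (hg : Tendsto g l (𝓝 g₀)) (hg₀ : 0 < g₀)
    (h : ∀ᶠ k in l, r k = n k * g k) : ∃ n₀ : ℤ, (∀ᶠ k in l, n k = n₀) ∧ r₀ = n₀ * g₀ := by
  have ht : Tendsto (fun k => (n k : ℝ)) l (𝓝 (r₀ / g₀)) := by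
    refine (hr.div hg hg₀.ne').congr' ?_
    filter_upwards [h, hg.eventually_const_lt hg₀] with k hk hk'
    simp only [Pi.div_apply]
    rw [hk, mul_div_cancel_right₀ _ hk'.ne']
  obtain ⟨n₀, hn₀⟩ := Int.isClosedEmbedding_coe_real.isClosed_range.mem_of_tendsto ht
    (Eventually.of_forall fun k => mem_range_self (n k))
  rw [← hn₀] at ht
  have ht' : Tendsto n l (𝓝 n₀) :=
    Int.isClosedEmbedding_coe_real.isEmbedding.tendsto_nhds_iff.2 ht
  rw [nhds_discrete, tendsto_pure] at ht'
  exact ⟨n₀, ht', by rw [hn₀, div_mul_cancel₀ _ hg₀.ne']⟩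

lemma eventually_eq_zero_int {α : Type*} {l : Filter α} {n : α → ℤ} {g r : α → ℝ}
    {r₀ : ℝ} (hr : Tendsto r l (𝓝 r₀)) (hg : ∀ G : ℝ, ∀ᶠ k in l, n k = 0 ∨ G < g k)
    (h : ∀ᶠ k in l, r k = n k * g k) : ∀ᶠ k in l, n k = 0 := by
  filter_upwards [h, hg (|r₀| + 1), hr.abs.eventually_lt_const (lt_add_one |r₀|)] with k h1 h2 h3
  rcases h2 with h2 | h2
  · exact h2
  by_contra hn
  have := one_le_abs_of_ne_zero hn
  have hp : 0 < g k := lt_of_le_of_lt (by positivity) h2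
  rw [h1, abs_mul, abs_of_pos hp] at h3
  nlinarith

lemma eventually_lt_rat (G : ℝ) : ∀ᶠ x in 𝓝 (1 : ℝ), x < 1 → G < rat x := by
  have hc : Tendsto (fun x : ℝ => x - G * (1 - x)) (𝓝 1) (𝓝 (1 - G * (1 - 1))) :=
    Continuous.tendsto (by fun_prop) 1
  filter_upwards [hc.eventually_const_lt (u := 0) (by norm_num)] with x hx hx1
  rw [rat, lt_div_iff₀ (by linarith)]
  linarith

lemma tendsto_height {α : Type*} {l : Filter α} {s x y : α → ℝ} {s₀ x₀ y₀ : ℝ}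
    (hs : Tendsto s l (𝓝 s₀)) (hx : Tendsto x l (𝓝 x₀)) (hy : Tendsto y l (𝓝 y₀))
    (hx₀ : x₀ < 1) (hy₀ : y₀ < 1) :
    Tendsto (fun k => height (s k) (x k) (y k)) l (𝓝 (height s₀ x₀ y₀)) := by
  have h1 := (continuousAt_rat hx₀).tendsto.comp hx
  have h2 := (continuousAt_rat hy₀).tendsto.comp hy
  exact ((h2.pow 2).sub ((hs.mul h1).pow 2)).sqrt

section Continuity

variable {α : Type*} {l : Filter α} {v : α → Euc 2} {s x y : α → ℝ} {v₀ : Euc 2} {s₀ x₀ y₀ : ℝ}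
  (ha : ∀ k, Admissible (v k) (s k) (x k) (y k)) (ha₀ : Admissible v₀ s₀ x₀ y₀)
  (hv : Tendsto v l (𝓝 v₀)) (hs : Tendsto s l (𝓝 s₀)) (hx : Tendsto x l (𝓝 x₀))
  (hy : Tendsto y l (𝓝 y₀))
include ha ha₀ hv hs hx hy

/-- The relation between parameters and members of the subgroup is closed. -/
lemma InGroup.of_tendsto [l.NeBot] {z : α → Euc 2} {z₀ : Euc 2} (hz : Tendsto z l (𝓝 z₀))
    (h : ∀ k, InGroup (v k) (s k) (x k) (y k) (z k)) : InGroup v₀ s₀ x₀ y₀ z₀ := by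
  choose n m h1 h2 h3 h4 using h
  have hal : Tendsto (fun k => along (v k) (z k)) l (𝓝 (along v₀ z₀)) :=
    (continuous_along.tendsto (v₀, z₀)).comp (hv.prodMk_nhds hz)
  have hac : Tendsto (fun k => across (v k) (z k)) l (𝓝 (across v₀ z₀)) :=
    (continuous_across.tendsto (v₀, z₀)).comp (hv.prodMk_nhds hz)
  rcases ha₀.y_nonneg.eq_or_lt with hy0 | hy0
  · exact ⟨0, 0, by simp, by simp, fun e => by linarith, fun e => by linarith [ha₀.le]⟩
  have hyk : ∀ᶠ k in l, across (v k) (z k) = n k * height (s k) (x k) (y k) := by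
    filter_upwards [hy.eventually_const_lt hy0] with k hk using h3 k hk
  obtain ⟨n₀, hn₀, hny, hna⟩ : ∃ n₀ : ℤ, (∀ᶠ k in l, n k = n₀) ∧ (y₀ = 1 → n₀ = 0) ∧
      across v₀ z₀ = n₀ * height s₀ x₀ y₀ := by
    rcases ha₀.le_one.eq_or_lt with hy1 | hy1
    · have hn : ∀ᶠ k in l, n k = 0 := by
        refine eventually_eq_zero_int hac (fun G => ?_) hyk
        subst hy1
        filter_upwards [hy.eventually (eventually_lt_rat (2 * G))] with k hk
        rcases (ha k).le_one.eq_or_lt with e | e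
        · exact Or.inl (h1 k e)
        · right
          linarith [(ha k).half_rat_le_height e, hk e]
      refine ⟨0, hn, fun _ => rfl, ?_⟩
      have : Tendsto (fun k => across (v k) (z k)) l (𝓝 0) := by
        refine tendsto_const_nhds.congr' ?_
        filter_upwards [hn, hyk] with k e1 e2
        rw [e2, e1]; simp
      simpa using tendsto_nhds_unique hac this
    · obtain ⟨n₀, e1, e2⟩ := exists_eventually_eq_int hac
        (tendsto_height hs hx hy (ha₀.le.trans_lt hy1) hy1) (ha₀.height_pos hy0 hy1) hyk
      exact ⟨n₀, e1, fun e => absurd e hy1.ne, e2⟩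
  rcases ha₀.nonneg.eq_or_lt with hx0 | hx0
  · exact ⟨n₀, 0, hny, by simp, fun _ => hna, fun e => by linarith⟩
  have hxk : ∀ᶠ k in l, along (v k) (z k) = (m k + n₀ * s k) * rat (x k) := by
    filter_upwards [hx.eventually_const_lt hx0, hn₀] with k hk hk'
    rw [h4 k hk, hk']
  rcases (ha₀.le.trans ha₀.le_one).eq_or_lt with hx1 | hx1
  · have hn : n₀ = 0 := hny (by linarith [ha₀.le, ha₀.le_one])
    simp only [hn, Int.cast_zero, zero_mul, add_zero] at hxk
    have hm : ∀ᶠ k in l, m k = 0 := by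
      refine eventually_eq_zero_int hal (fun G => ?_) hxk
      subst hx1
      filter_upwards [hx.eventually (eventually_lt_rat G)] with k hk
      rcases ((ha k).le.trans (ha k).le_one).eq_or_lt with e | e
      · exact Or.inl (h2 k e)
      · exact Or.inr (hk e)
    have : Tendsto (fun k => along (v k) (z k)) l (𝓝 0) := by
      refine tendsto_const_nhds.congr' ?_
      filter_upwards [hm, hxk] with k e1 e2
      rw [e2, e1]; simp
    refine ⟨n₀, 0, hny, fun _ => rfl, fun _ => hna, fun _ => ?_⟩
    simpa [hn] using tendsto_nhds_unique hal this
  · have hrat : Tendsto (fun k => rat (x k)) l (𝓝 (rat x₀)) :=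
      (continuousAt_rat hx1).tendsto.comp hx
    obtain ⟨m₀, -, e⟩ := exists_eventually_eq_int (n := m)
      (hal.sub ((hs.const_mul (n₀ : ℝ)).mul hrat)) hrat (rat_pos hx0 hx1) (by
        filter_upwards [hxk] with k hk
        rw [hk]; ring)
    exact ⟨n₀, m₀, hny, fun e => absurd e hx1.ne, fun _ => hna, fun _ => by linarith⟩

end Continuity

lemma exists_int_mul_near {g : ℝ} (hg : 0 ≤ g) (r : ℝ) :
    ∃ (n : ℤ) (q : ℝ), |q - r| ≤ g ∧ (g ≠ 0 → q = n * g) := by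
  rcases hg.eq_or_lt with rfl | h
  · exact ⟨0, r, by simp⟩
  · refine ⟨⌊r / g⌋, ⌊r / g⌋ * g, ?_, fun _ => rfl⟩
    have h1 := Int.floor_le (r / g)
    have h2 := Int.lt_floor_add_one (r / g)
    rw [le_div_iff₀ h] at h1
    rw [div_lt_iff₀ h] at h2
    rw [abs_le]
    constructor <;> linarith

lemma continuous_frame : Continuous fun p : Euc 2 × ℝ × ℝ => frame p.1 p.2.1 p.2.2 := by
  unfold frame
  refine (PiLp.continuous_toLp 2 _).comp (continuous_pi fun i => ?_)
  fin_cases i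
  · simp; fun_prop
  · simp; fun_prop

section LowerContinuity

variable {α : Type*} {l : Filter α} {v : α → Euc 2} {s x y : α → ℝ} {v₀ : Euc 2} {s₀ x₀ y₀ : ℝ}
  (ha : ∀ k, Admissible (v k) (s k) (x k) (y k)) (ha₀ : Admissible v₀ s₀ x₀ y₀)
  (hv : Tendsto v l (𝓝 v₀)) (hs : Tendsto s l (𝓝 s₀)) (hx : Tendsto x l (𝓝 x₀))
  (hy : Tendsto y l (𝓝 y₀))
include ha ha₀ hv hs hx hy

/-- Every member of the limiting subgroup is a limit of members of the nearby subgroups. -/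
lemma InGroup.exists_tendsto {z₀ : Euc 2} (h : InGroup v₀ s₀ x₀ y₀ z₀) :
    ∃ z : α → Euc 2, Tendsto z l (𝓝 z₀) ∧
      ∀ᶠ k in l, InGroup (v k) (s k) (x k) (y k) (z k) := by
  obtain ⟨n₀, m₀, h1, h2, h3, h4⟩ := h
  obtain ⟨N, Q, hQ, hNQ, hN⟩ : ∃ (N : α → ℤ) (Q : α → ℝ), Tendsto Q l (𝓝 (across v₀ z₀)) ∧
      (∀ᶠ k in l, (y k = 1 → N k = 0) ∧ (0 < y k → Q k = N k * height (s k) (x k) (y k))) ∧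
      (0 < x₀ → ∀ k, N k = n₀) := by
    rcases ha₀.le_one.eq_or_lt with hy1 | hy1
    · have hn := h1 hy1
      have h3 := h3 (by linarith)
      rw [hn] at h3
      refine ⟨fun _ => 0, fun _ => 0, ?_, by simp, by simp [hn]⟩
      rw [h3]
      simp [tendsto_const_nhds]
    have hh := tendsto_height hs hx hy (ha₀.le.trans_lt hy1) hy1
    have hyk := hy.eventually_lt_const hy1
    rcases ha₀.y_nonneg.eq_or_lt with hy0 | hy0
    · have hx0 : x₀ = 0 := by linarith [ha₀.le, ha₀.nonneg]
      choose N Q hQ hNQ using fun k =>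
        exists_int_mul_near (height_nonneg (s k) (x k) (y k)) (across v₀ z₀)
      refine ⟨N, Q, ?_, ?_, fun e => absurd e (by simp [hx0])⟩
      · rw [tendsto_iff_norm_sub_tendsto_zero]
        refine squeeze_zero (fun _ => norm_nonneg _) (fun k => hQ k) ?_
        rwa [hx0, ← hy0, height_zero_left le_rfl zero_le_one, rat_zero] at hh
      · filter_upwards [hyk] with k hk
        exact ⟨fun e => absurd e hk.ne, fun e => hNQ k ((ha k).height_pos e hk).ne'⟩
    · refine ⟨fun _ => n₀, fun k => n₀ * height (s k) (x k) (y k), ?_, ?_, fun _ _ => rfl⟩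
      · rw [h3 hy0]; exact hh.const_mul _
      · filter_upwards [hyk] with k hk
        exact ⟨fun e => absurd e hk.ne, fun _ => rfl⟩
  obtain ⟨M, P, hP, hMP⟩ : ∃ (M : α → ℤ) (P : α → ℝ), Tendsto P l (𝓝 (along v₀ z₀)) ∧
      (∀ᶠ k in l, (x k = 1 → M k = 0) ∧ (0 < x k → P k = (M k + N k * s k) * rat (x k))) := by
    rcases (ha₀.le.trans ha₀.le_one).eq_or_lt with hx1 | hx1
    · have hm := h2 hx1
      have hn := h1 (by linarith [ha₀.le, ha₀.le_one])
      have h4 := h4 (by linarith)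
      have hN := hN (by linarith)
      rw [hm, hn] at h4
      refine ⟨fun _ => 0, fun _ => 0, ?_, by simp [hN, hn]⟩
      rw [h4]
      simp [tendsto_const_nhds]
    have hh : Tendsto (fun k => rat (x k)) l (𝓝 (rat x₀)) :=
      (continuousAt_rat hx1).tendsto.comp hx
    have hxk := hx.eventually_lt_const hx1
    rcases ha₀.nonneg.eq_or_lt with hx0 | hx0
    · choose M P hP hMP using fun k =>
        exists_int_mul_near (rat_nonneg (ha k).nonneg ((ha k).le.trans (ha k).le_one))
          (along v₀ z₀ - N k * s k * rat (x k))
      refine ⟨M, fun k => P k + N k * s k * rat (x k), ?_, ?_⟩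
      · rw [tendsto_iff_norm_sub_tendsto_zero]
        refine squeeze_zero (fun _ => norm_nonneg _) (fun k => ?_)
          (by rwa [← hx0, rat_zero] at hh)
        convert hP k using 1
        rw [Real.norm_eq_abs]
        congr 1
        ring
      · filter_upwards [hxk] with k hk
        refine ⟨fun e => absurd e hk.ne, fun e => ?_⟩
        rw [hMP k (rat_pos e hk).ne']
        ring
    · refine ⟨fun _ => m₀, fun k => (m₀ + n₀ * s k) * rat (x k), ?_, ?_⟩
      · rw [h4 hx0]
        exact ((hs.const_mul _).const_add _).mul hh
      · filter_upwards [hxk] with k hk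
        exact ⟨fun e => absurd e hk.ne, fun _ => by rw [hN hx0 k]⟩
  refine ⟨fun k => frame (v k) (P k) (Q k), ?_, ?_⟩
  · have := (continuous_frame.tendsto (v₀, along v₀ z₀, across v₀ z₀)).comp
      (hv.prodMk_nhds (hP.prodMk_nhds hQ))
    rwa [frame_along_across ha₀.unit] at this
  · filter_upwards [hNQ, hMP] with k e1 e2
    refine ⟨N k, M k, e1.1, e2.1, fun e => ?_, fun e => ?_⟩
    · rw [across_frame (ha k).unit]; exact e1.2 e
    · rw [along_frame (ha k).unit]; exact e2.2 e

end LowerContinuity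

/-- The closed subgroup with given parameters. -/
def paramGroup {v : Euc 2} {s x y : ℝ} (ha : Admissible v s x y) : ChabautyPoint 2 :=
  ⟨{ carrier := {z | InGroup v s x y z}
     zero_mem' := inGroup_zero v s x y
     add_mem' := InGroup.add
     neg_mem' := InGroup.neg },
    IsSeqClosed.isClosed fun _ _ hz hlim =>
      InGroup.of_tendsto (fun _ => ha) ha tendsto_const_nhds tendsto_const_nhds
        tendsto_const_nhds tendsto_const_nhds hlim hz⟩

lemma mem_paramGroup {v : Euc 2} {s x y : ℝ} (ha : Admissible v s x y) (z : Euc 2) :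
    z ∈ (paramGroup ha).1 ↔ InGroup v s x y z := Iff.rfl

lemma paramGroup_eq_iff {v v' : Euc 2} {s s' x x' y y' : ℝ} (ha : Admissible v s x y)
    (ha' : Admissible v' s' x' y') :
    paramGroup ha = paramGroup ha' ↔ ∀ z, InGroup v s x y z ↔ InGroup v' s' x' y' z := by
  constructor
  · intro h z
    rw [← mem_paramGroup ha, h, mem_paramGroup]
  · intro h
    exact Subtype.ext (AddSubgroup.ext h)

lemma continuous_paramGroup {X : Type*} [TopologicalSpace X] [FirstCountableTopology X]
    {v : X → Euc 2} {s x y : X → ℝ} (ha : ∀ k, Admissible (v k) (s k) (x k) (y k))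
    (hv : Continuous v) (hs : Continuous s) (hx : Continuous x) (hy : Continuous y) :
    Continuous fun k => paramGroup (ha k) := by
  refine continuous_generateFrom_iff.2 ?_
  rintro S (⟨K, hK, rfl⟩ | ⟨U, hU, rfl⟩)
  · rw [← isClosed_compl_iff]
    refine IsSeqClosed.isClosed fun k k₀ hk hlim => ?_
    have hk' : ∀ i, ∃ z ∈ K, InGroup (v (k i)) (s (k i)) (x (k i)) (y (k i)) z := by
      intro i
      obtain ⟨z, hz, hzK⟩ := Set.nonempty_iff_ne_empty.2 (hk i)
      exact ⟨z, hzK, hz⟩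
    choose z hzK hz using hk'
    obtain ⟨z₀, hz₀, φ, hφ, hlim'⟩ := hK.tendsto_subseq hzK
    have hl := hlim.comp hφ.tendsto_atTop
    have : InGroup (v k₀) (s k₀) (x k₀) (y k₀) z₀ :=
      InGroup.of_tendsto (fun i => ha (k (φ i))) (ha k₀) ((hv.tendsto _).comp hl)
        ((hs.tendsto _).comp hl) ((hx.tendsto _).comp hl) ((hy.tendsto _).comp hl) hlim'
        fun i => hz (φ i)
    exact Set.nonempty_iff_ne_empty.1 ⟨z₀, this, hz₀⟩
  · rw [isOpen_iff_eventually]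
    rintro k₀ ⟨z₀, hz₀, hzU⟩
    obtain ⟨z, hz, hmem⟩ := InGroup.exists_tendsto ha (ha k₀) (hv.tendsto k₀) (hs.tendsto k₀)
      (hx.tendsto k₀) (hy.tendsto k₀) hz₀
    filter_upwards [hz.eventually (hU.mem_nhds hzU), hmem] with k h1 h2
    exact ⟨z k, h2, h1⟩

instance chabautyPoint_t2Space (n : ℕ) : T2Space (ChabautyPoint n) := by
  have key : ∀ (Γ Γ' : ChabautyPoint n) (z : Euc n), z ∈ Γ.1 → z ∉ Γ'.1 →
      ∃ U V : Set (ChabautyPoint n), IsOpen U ∧ IsOpen V ∧ Γ ∈ U ∧ Γ' ∈ V ∧ Disjoint U V := by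
    intro Γ Γ' z hz hz'
    obtain ⟨ε, hε, hball⟩ := Metric.isOpen_iff.1 Γ'.2.isOpen_compl z hz'
    refine ⟨{Δ | ((Δ.1 : Set (Euc n)) ∩ Metric.ball z (ε / 2)).Nonempty},
      {Δ | ((Δ.1 : Set (Euc n)) ∩ Metric.closedBall z (ε / 2)) = ∅},
      TopologicalSpace.isOpen_generateFrom_of_mem (Or.inr ⟨_, Metric.isOpen_ball, rfl⟩),
      TopologicalSpace.isOpen_generateFrom_of_mem
        (Or.inl ⟨_, isCompact_closedBall z (ε / 2), rfl⟩),
      ⟨z, hz, Metric.mem_ball_self (by linarith)⟩, ?_, ?_⟩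
    · rw [mem_ofPred_eq, Set.eq_empty_iff_forall_notMem]
      rintro w ⟨hw, hwb⟩
      exact hball (Metric.closedBall_subset_ball (by linarith) hwb) hw
    · rw [Set.disjoint_left]
      rintro Δ ⟨w, hw, hwb⟩ hΔ
      have : w ∈ (Δ.1 : Set (Euc n)) ∩ Metric.closedBall z (ε / 2) :=
        ⟨hw, Metric.ball_subset_closedBall hwb⟩
      rw [mem_ofPred_eq] at hΔ
      rw [hΔ] at this
      exact this
  refine ⟨fun Γ Γ' hne => ?_⟩
  by_cases hc : ∃ z, z ∈ Γ.1 ∧ z ∉ Γ'.1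
  · obtain ⟨z, hz, hz'⟩ := hc
    exact key Γ Γ' z hz hz'
  · push Not at hc
    obtain ⟨z, hz, hz'⟩ : ∃ z, z ∈ Γ'.1 ∧ z ∉ Γ.1 := by
      by_contra! hc'
      exact hne (Subtype.ext (le_antisymm hc hc'))
    obtain ⟨U, V, hU, hV, h1, h2, hd⟩ := key Γ' Γ z hz hz'
    exact ⟨V, U, hV, hU, h2, h1, hd.symm⟩

/-! ### Every closed subgroup has parameters -/

lemma le_of_rat_le {x y : ℝ} (hx : x < 1) (h : rat x ≤ rat y) : x ≤ y := by
  by_contra hc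
  exact absurd h (not_le.2 (rat_lt_rat (not_le.1 hc) hx))

lemma exists_int_abs_sub_mul_le {g : ℝ} (hg : 0 < g) (r : ℝ) : ∃ n : ℤ, |r - n * g| ≤ g / 2 := by
  refine ⟨round (r / g), ?_⟩
  have h := abs_sub_round (r / g)
  have e : r - round (r / g) * g = (r / g - round (r / g)) * g := by field_simp
  rw [e, abs_mul, abs_of_pos hg]
  nlinarith

lemma unit_inv_norm_smul {u : Euc 2} (hu : u ≠ 0) :
    (‖u‖⁻¹ • u) 0 ^ 2 + (‖u‖⁻¹ • u) 1 ^ 2 = 1 := by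
  rw [← norm_sq_eq, norm_smul, norm_inv, norm_norm, inv_mul_cancel₀ (norm_ne_zero_iff.2 hu),
    one_pow]

lemma along_sub (v z z' : Euc 2) : along v (z - z') = along v z - along v z' := by
  rw [sub_eq_add_neg, along_add, along_neg, sub_eq_add_neg]

lemma across_sub (v z z' : Euc 2) : across v (z - z') = across v z - across v z' := by
  rw [sub_eq_add_neg, across_add, across_neg, sub_eq_add_neg]

lemma along_zsmul (v z : Euc 2) (n : ℤ) : along v (n • z) = n * along v z := by
  rw [← Int.cast_smul_eq_zsmul ℝ, along_smul]

lemma across_zsmul (v z : Euc 2) (n : ℤ) : across v (n • z) = n * across v z := by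
  rw [← Int.cast_smul_eq_zsmul ℝ, across_smul]

lemma exists_param_bot : ∃ (v : Euc 2) (s x y : ℝ), Admissible v s x y ∧
    ∀ z, z ∈ (⊥ : AddSubgroup (Euc 2)) ↔ InGroup v s x y z := by
  have ha : Admissible !₂[1, 0] 0 1 1 := ⟨by simp, by norm_num, by norm_num, by norm_num,
    le_rfl, le_rfl⟩
  refine ⟨_, _, _, _, ha, fun z => ?_⟩
  rw [AddSubgroup.mem_bot]
  constructor
  · rintro rfl
    exact inGroup_zero _ _ _ _
  · rintro ⟨n, m, h1, h2, h3, h4⟩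
    have h3 := h3 one_pos
    have h4 := h4 one_pos
    simp only [h1, h2, Int.cast_zero, zero_mul, add_zero] at h3 h4
    exact eq_zero_of_along_across ha.unit h4 h3

/-- A discrete subgroup of a line through a shortest vector. -/
lemma exists_param_of_line {Γ : AddSubgroup (Euc 2)} {u : Euc 2} (hu : u ∈ Γ) (hu0 : u ≠ 0)
    (hmin : ∀ z ∈ Γ, z ≠ 0 → ‖u‖ ≤ ‖z‖) (hline : ∀ z ∈ Γ, across (‖u‖⁻¹ • u) z = 0) :
    ∃ (v : Euc 2) (s x y : ℝ), Admissible v s x y ∧ ∀ z, z ∈ Γ ↔ InGroup v s x y z := by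
  have hpos : 0 < ‖u‖ := norm_pos_iff.2 hu0
  have hv := unit_inv_norm_smul hu0
  set v := ‖u‖⁻¹ • u with hvdef
  have huv : u = ‖u‖ • v := by rw [hvdef, smul_inv_smul₀ hpos.ne']
  have hal : along v u = ‖u‖ := by
    conv_lhs => rw [huv]
    rw [along_smul, along_self hv, mul_one]
  obtain ⟨x, hx0, hx1, hx⟩ := exists_rat_eq hpos.le
  refine ⟨v, 0, x, 1, ⟨hv, by norm_num, by norm_num, hx0, hx1.le, le_rfl⟩, fun z => ⟨?_, ?_⟩⟩
  · intro hz
    obtain ⟨m, hm⟩ := exists_int_abs_sub_mul_le hpos (along v z)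
    refine ⟨0, m, fun _ => rfl, fun e => absurd e hx1.ne, fun _ => ?_, fun _ => ?_⟩
    · simp [hline z hz]
    · have hd : z - m • u ∈ Γ := Γ.sub_mem hz (Γ.zsmul_mem hu m)
      have hd0 : z - m • u = 0 := by
        by_contra hne
        have h1 := hmin _ hd hne
        have h2 := norm_sq_eq_along_across hv (z - m • u)
        rw [hline _ hd, along_sub, along_zsmul, hal] at h2
        have h3 := sq_le_sq' (abs_le.1 hm).1 (abs_le.1 hm).2
        nlinarith
      rw [sub_eq_zero] at hd0
      rw [hd0, along_zsmul, hal, hx]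
      simp
  · rintro ⟨n, m, h1, h2, h3, h4⟩
    have hxpos : 0 < x := by
      refine hx0.lt_of_ne ?_
      rintro rfl
      rw [rat_zero] at hx
      linarith
    have h3 := h3 one_pos
    have h4 := h4 hxpos
    simp only [h1, Int.cast_zero, zero_mul, add_zero] at h3 h4
    have : z = m • u := by
      rw [← sub_eq_zero]
      apply eq_zero_of_along_across hv
      · rw [along_sub, along_zsmul, hal, h4, hx, sub_self]
      · rw [across_sub, across_zsmul, hline u hu, h3]; simp
    rw [this]
    exact Γ.zsmul_mem hu m

/-- A lattice with a shortest vector `u` and a second shortest vector `w`. -/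
lemma exists_param_of_basis {Γ : AddSubgroup (Euc 2)} {u w : Euc 2} (hu : u ∈ Γ) (hu0 : u ≠ 0)
    (hmin : ∀ z ∈ Γ, z ≠ 0 → ‖u‖ ≤ ‖z‖) (hw : w ∈ Γ) (hwu : 0 < across (‖u‖⁻¹ • u) w)
    (hmin' : ∀ z ∈ Γ, across (‖u‖⁻¹ • u) z ≠ 0 → ‖w‖ ≤ ‖z‖) :
    ∃ (v : Euc 2) (s x y : ℝ), Admissible v s x y ∧ ∀ z, z ∈ Γ ↔ InGroup v s x y z := by
  have hpos : 0 < ‖u‖ := norm_pos_iff.2 hu0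
  have hv := unit_inv_norm_smul hu0
  set v := ‖u‖⁻¹ • u with hvdef
  have huv : u = ‖u‖ • v := by rw [hvdef, smul_inv_smul₀ hpos.ne']
  have hal : along v u = ‖u‖ := by
    conv_lhs => rw [huv]
    rw [along_smul, along_self hv, mul_one]
  have hac : across v u = 0 := by
    rw [huv, across_smul, across_self, mul_zero]
  have hw0 : w ≠ 0 := by rintro rfl; simp at hwu
  have huw := hmin w hw hw0
  have hwn := norm_sq_eq_along_across hv w
  have hle : along v w ≤ ‖u‖ / 2 := by
    have h1 := hmin' (w - u) (Γ.sub_mem hw hu) (by rw [across_sub, hac, sub_zero]; exact hwu.ne')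
    have h2 := norm_sq_eq_along_across hv (w - u)
    rw [along_sub, across_sub, hac, hal] at h2
    have h3 := pow_le_pow_left₀ (norm_nonneg w) h1 2
    nlinarith
  have hge : -(‖u‖ / 2) ≤ along v w := by
    have h1 := hmin' (w + u) (Γ.add_mem hw hu) (by rw [across_add, hac, add_zero]; exact hwu.ne')
    have h2 := norm_sq_eq_along_across hv (w + u)
    rw [along_add, across_add, hac, hal] at h2
    have h3 := pow_le_pow_left₀ (norm_nonneg w) h1 2
    nlinarith
  obtain ⟨x, hx0, hx1, hx⟩ := exists_rat_eq hpos.le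
  obtain ⟨y, hy0, hy1, hy⟩ := exists_rat_eq (norm_nonneg w)
  have hxpos : 0 < x := by
    refine hx0.lt_of_ne ?_
    rintro rfl
    rw [rat_zero] at hx
    linarith
  have hxy : x ≤ y := le_of_rat_le hx1 (by rw [hx, hy]; exact huw)
  have hs : along v w / ‖u‖ * rat x = along v w := by rw [hx, div_mul_cancel₀ _ hpos.ne']
  have hh : height (along v w / ‖u‖) x y = across v w := by
    rw [height, hs, hy, hwn, add_sub_cancel_left, Real.sqrt_sq hwu.le]
  refine ⟨v, along v w / ‖u‖, x, y, ⟨hv, ?_, ?_, hx0, hxy, hy1.le⟩, fun z => ⟨?_, ?_⟩⟩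
  · rw [le_div_iff₀ hpos]; linarith
  · rw [div_le_iff₀ hpos]; linarith
  · intro hz
    obtain ⟨n, hn⟩ := exists_int_abs_sub_mul_le hwu (across v z)
    obtain ⟨m, hm⟩ := exists_int_abs_sub_mul_le hpos (along v z - n * along v w)
    have hd : z - n • w - m • u ∈ Γ :=
      Γ.sub_mem (Γ.sub_mem hz (Γ.zsmul_mem hw n)) (Γ.zsmul_mem hu m)
    have e1 : along v (z - n • w - m • u) = along v z - n * along v w - m * ‖u‖ := by
      rw [along_sub, along_sub, along_zsmul, along_zsmul, hal]
    have e2 : across v (z - n • w - m • u) = across v z - n * across v w := by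
      rw [across_sub, across_sub, across_zsmul, across_zsmul, hac, mul_zero, sub_zero]
    have h2 := norm_sq_eq_along_across hv (z - n • w - m • u)
    rw [e1, e2] at h2
    have h3 := sq_le_sq' (abs_le.1 hm).1 (abs_le.1 hm).2
    have h4 := sq_le_sq' (abs_le.1 hn).1 (abs_le.1 hn).2
    have hcross : across v z - n * across v w = 0 := by
      by_contra hne
      have h1 := pow_le_pow_left₀ (norm_nonneg w) (hmin' _ hd (by rwa [e2])) 2
      nlinarith [sq_nonneg (along v w)]
    have hd0 : z - n • w - m • u = 0 := by
      by_contra hne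
      have h1 := pow_le_pow_left₀ (norm_nonneg u) (hmin _ hd hne) 2
      rw [hcross] at h2
      nlinarith
    refine ⟨n, m, fun e => absurd e hy1.ne, fun e => absurd e hx1.ne, fun _ => ?_, fun _ => ?_⟩
    · rw [hh]; linarith
    · rw [hd0, along_zero] at e1
      rw [add_mul, mul_assoc, hs, hx]; linarith
  · rintro ⟨n, m, -, -, h3, h4⟩
    have h3 := h3 (hxpos.trans_le hxy)
    have h4 := h4 hxpos
    rw [hh] at h3
    rw [add_mul, mul_assoc, hs, hx] at h4
    have : z = n • w + m • u := by
      rw [← sub_eq_zero]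
      apply eq_zero_of_along_across hv
      · rw [along_sub, along_add, along_zsmul, along_zsmul, hal, h4]; ring
      · rw [across_sub, across_add, across_zsmul, across_zsmul, hac, h3]; ring
    rw [this]
    exact Γ.add_mem (Γ.zsmul_mem hw n) (Γ.zsmul_mem hu m)

/-- A discrete subgroup has parameters. -/
lemma exists_param_of_discrete {Γ : AddSubgroup (Euc 2)} (hΓ : IsClosed (Γ : Set (Euc 2)))
    {ε : ℝ} (hε : 0 < ε) (hdisc : ∀ z ∈ Γ, z ≠ 0 → ε ≤ ‖z‖) :
    ∃ (v : Euc 2) (s x y : ℝ), Admissible v s x y ∧ ∀ z, z ∈ Γ ↔ InGroup v s x y z := by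
  have : DiscreteTopology (Γ : Set (Euc 2)) := by
    refine DiscreteTopology.of_forall_le_dist hε fun z z' hne => ?_
    change ε ≤ dist z z'
    rw [Subtype.dist_eq, dist_eq_norm]
    exact hdisc _ (Γ.sub_mem z.2 z'.2) (sub_ne_zero.2 (Subtype.coe_injective.ne hne))
  have hmin : ∀ p : Euc 2 → Prop, (∃ z ∈ Γ, p z) →
      ∃ u ∈ Γ, p u ∧ ∀ z ∈ Γ, p z → ‖u‖ ≤ ‖z‖ := by
    rintro p ⟨z₁, hz₁, hp₁⟩
    have hfin : (Metric.closedBall 0 ‖z₁‖ ∩ (Γ : Set (Euc 2))).Finite :=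
      Metric.finite_isBounded_inter_isClosed ⟨this⟩ Metric.isBounded_closedBall hΓ
    obtain ⟨u, ⟨⟨-, hu⟩, hpu⟩, hmin⟩ := Set.exists_min_image
      ((Metric.closedBall 0 ‖z₁‖ ∩ (Γ : Set (Euc 2))) ∩ {z | p z}) (fun z => ‖z‖)
      (hfin.subset inter_subset_left) ⟨z₁, ⟨by simp, hz₁⟩, hp₁⟩
    refine ⟨u, hu, hpu, fun z hz hpz => ?_⟩
    by_cases hc : ‖z‖ ≤ ‖z₁‖
    · exact hmin z ⟨⟨by simpa using hc, hz⟩, hpz⟩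
    · exact (hmin z₁ ⟨⟨by simp, hz₁⟩, hp₁⟩).trans (not_le.1 hc).le
  by_cases hbot : ∃ z ∈ Γ, z ≠ 0
  · obtain ⟨u, hu, hu0, humin⟩ := hmin _ hbot
    by_cases hline : ∃ z ∈ Γ, across (‖u‖⁻¹ • u) z ≠ 0
    · obtain ⟨w, hw, hw0, hwmin⟩ := hmin _ hline
      rcases hw0.lt_or_gt with h | h
      · refine exists_param_of_basis hu hu0 humin (Γ.neg_mem hw) ?_ ?_
        · rw [across_neg]; linarith
        · simpa using hwmin
      · exact exists_param_of_basis hu hu0 humin hw h hwmin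
    · push Not at hline
      exact exists_param_of_line hu hu0 humin hline
  · push Not at hbot
    obtain rfl : Γ = ⊥ := (AddSubgroup.eq_bot_iff_forall Γ).2 hbot
    exact exists_param_bot

/-- A closed subgroup with arbitrarily short nonzero vectors contains a line. -/
lemma exists_line_of_not_discrete {Γ : AddSubgroup (Euc 2)} (hΓ : IsClosed (Γ : Set (Euc 2)))
    (h : ∀ ε > 0, ∃ z ∈ Γ, z ≠ 0 ∧ ‖z‖ < ε) :
    ∃ v : Euc 2, v 0 ^ 2 + v 1 ^ 2 = 1 ∧ ∀ r : ℝ, r • v ∈ Γ := by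
  obtain ⟨δ, -, hδ, hδ0⟩ := exists_seq_strictAnti_tendsto (0 : ℝ)
  choose z hz hz0 hzδ using fun k => h (δ k) (hδ k)
  have hlim : Tendsto (fun k => ‖z k‖) atTop (𝓝 0) :=
    squeeze_zero (fun _ => norm_nonneg _) (fun k => (hzδ k).le) hδ0
  obtain ⟨v, hv, φ, hφ, hvlim⟩ := (isCompact_sphere (0 : Euc 2) 1).tendsto_subseq
    (x := fun k => ‖z k‖⁻¹ • z k) fun k => by
      simp [norm_smul, inv_mul_cancel₀ (norm_ne_zero_iff.2 (hz0 k))]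
  refine ⟨v, ?_, fun r => ?_⟩
  · rw [← norm_sq_eq, mem_sphere_zero_iff_norm.1 hv, one_pow]
  choose n q hq hnq using fun k => exists_int_mul_near (norm_nonneg (z k)) r
  have hqlim : Tendsto q atTop (𝓝 r) := by
    rw [tendsto_iff_norm_sub_tendsto_zero]
    exact squeeze_zero (fun _ => norm_nonneg _) hq hlim
  refine hΓ.mem_of_tendsto ((hqlim.comp hφ.tendsto_atTop).smul hvlim)
    (Eventually.of_forall fun k => ?_)
  have hne := norm_ne_zero_iff.2 (hz0 (φ k))
  have : q (φ k) • (‖z (φ k)‖⁻¹ • z (φ k)) = n (φ k) • z (φ k) := by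
    rw [hnq (φ k) hne, smul_smul, mul_assoc, mul_inv_cancel₀ hne, mul_one,
      Int.cast_smul_eq_zsmul]
  simp only [Function.comp_apply, SetLike.mem_coe, this]
  exact Γ.zsmul_mem (hz _) _

lemma exists_param_of_not_discrete {Γ : AddSubgroup (Euc 2)} (hΓ : IsClosed (Γ : Set (Euc 2)))
    (h : ∀ ε > 0, ∃ z ∈ Γ, z ≠ 0 ∧ ‖z‖ < ε) :
    ∃ (v : Euc 2) (s x y : ℝ), Admissible v s x y ∧ ∀ z, z ∈ Γ ↔ InGroup v s x y z := by
  obtain ⟨v, hv, hline⟩ := exists_line_of_not_discrete hΓ h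
  have hadd : ∀ q q', frame v 0 (q + q') = frame v 0 q + frame v 0 q' := by
    intro q q'
    ext i
    fin_cases i <;> simp [frame] <;> ring
  have hneg : ∀ q, frame v 0 (-q) = -frame v 0 q := by
    intro q
    ext i
    fin_cases i <;> simp [frame]
  let H : AddSubgroup ℝ :=
    { carrier := {q | frame v 0 q ∈ Γ}
      zero_mem' := by
        have : frame v 0 0 = 0 := by ext i; fin_cases i <;> simp [frame]
        rw [mem_ofPred_eq, this]
        exact Γ.zero_mem
      add_mem' := fun {q q'} hq hq' => by
        rw [mem_ofPred_eq, hadd]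
        exact Γ.add_mem hq hq'
      neg_mem' := fun {q} hq => by
        rw [mem_ofPred_eq, hneg]
        exact Γ.neg_mem hq }
  have hHΓ : ∀ z, z ∈ Γ ↔ across v z ∈ H := by
    intro z
    have hz : z = along v z • v + frame v 0 (across v z) := by
      conv_lhs => rw [← frame_along_across hv z]
      ext i
      fin_cases i
      · simp [frame, sub_eq_add_neg]
      · simp [frame]
    conv_lhs => rw [hz]
    exact Γ.add_mem_cancel_left (hline _)
  have hHclosed : IsClosed (H : Set ℝ) :=
    hΓ.preimage (continuous_frame.comp (by fun_prop : Continuous fun q : ℝ => (v, (0 : ℝ), q)))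
  rcases H.dense_or_cyclic with hd | ⟨a, ha⟩
  · have hH : ∀ q, q ∈ H := fun q => by
      have := hHclosed.closure_eq ▸ hd q
      exact this
    refine ⟨v, 0, 0, 0, ⟨hv, by norm_num, by norm_num, le_rfl, le_rfl, zero_le_one⟩,
      fun z => ⟨fun _ => ⟨0, 0, by simp⟩, fun _ => (hHΓ z).2 (hH _)⟩⟩
  · have hmem : ∀ q, q ∈ H ↔ ∃ n : ℤ, n * a = q := fun q => by
      rw [ha, AddSubgroup.mem_closure_singleton]
      simp
    rcases eq_or_ne a 0 with rfl | ha0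
    · refine ⟨v, 0, 0, 1, ⟨hv, by norm_num, by norm_num, le_rfl, zero_le_one, le_rfl⟩,
        fun z => ?_⟩
      rw [hHΓ, hmem]
      constructor
      · rintro ⟨n, hn⟩
        exact ⟨0, 0, by simp, by simp, fun _ => by simpa using hn.symm, by simp⟩
      · rintro ⟨n, m, h1, -, h3, -⟩
        exact ⟨0, by simpa [h1 rfl, eq_comm] using h3 one_pos⟩
    · have hpos := abs_pos.2 ha0
      obtain ⟨y, hy0, hy1, hy⟩ := exists_rat_eq hpos.le
      have hypos : 0 < y := by
        refine hy0.lt_of_ne ?_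
        rintro rfl
        rw [rat_zero] at hy
        linarith
      refine ⟨v, 0, 0, y, ⟨hv, by norm_num, by norm_num, le_rfl, hy0, hy1.le⟩, fun z => ?_⟩
      rw [hHΓ, hmem, InGroup]
      simp only [hypos, forall_const, lt_irrefl, false_implies, and_true, hy1.ne, true_and,
        height_zero_left hy0 hy1.le, hy, zero_ne_one]
      constructor
      · rintro ⟨n, hn⟩
        rcases abs_choice a with e | e
        · exact ⟨n, 0, by rw [e, hn]⟩
        · exact ⟨-n, 0, by rw [e, ← hn]; push_cast; ring⟩
      · rintro ⟨n, -, hn⟩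
        rcases abs_choice a with e | e
        · exact ⟨n, by rw [hn, e]⟩
        · exact ⟨-n, by rw [hn, e]; push_cast; ring⟩

lemma exists_paramGroup_eq (Γ : ChabautyPoint 2) :
    ∃ (v : Euc 2) (s x y : ℝ) (ha : Admissible v s x y), paramGroup ha = Γ := by
  obtain ⟨v, s, x, y, ha, h⟩ : ∃ (v : Euc 2) (s x y : ℝ), Admissible v s x y ∧
      ∀ z, z ∈ Γ.1 ↔ InGroup v s x y z := by
    by_cases hd : ∃ ε > 0, ∀ z ∈ Γ.1, z ≠ 0 → ε ≤ ‖z‖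
    · obtain ⟨ε, hε, hd⟩ := hd
      exact exists_param_of_discrete Γ.2 hε hd
    · push Not at hd
      exact exists_param_of_not_discrete Γ.2 hd
  exact ⟨v, s, x, y, ha, Subtype.ext (AddSubgroup.ext fun z => (h z).symm)⟩

/-! ### Lattices and subgroups of norm one in terms of the parameters -/

lemma mem_normOne_iff {v : Euc 2} {s x y : ℝ} (ha : Admissible v s x y) :
    paramGroup ha ∈ normOne ↔ x = 1 / 2 := by
  constructor
  · rintro ⟨u, hu, hu1, hmin⟩
    have hu0 : u ≠ 0 := by rintro rfl; simp at hu1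
    obtain ⟨hx, hr⟩ := (ha.exists_ne_zero_iff one_pos).1 ⟨u, hu, hu0, hu1.le⟩
    have hr' : rat x = 1 := by
      refine hr.antisymm (not_lt.1 fun hlt => ?_)
      obtain ⟨z, hz, hz0, hzr⟩ := (ha.exists_ne_zero_iff (r := max (rat x) (1 / 2))
        (by positivity)).2 ⟨hx, le_max_left _ _⟩
      have h1 := hmin z hz hz0
      have h2 : max (rat x) (1 / 2) < 1 := max_lt hlt (by norm_num)
      linarith
    rw [rat, div_eq_one_iff_eq (by linarith)] at hr'
    linarith
  · rintro rfl
    have hx : (1 / 2 : ℝ) < 1 := by norm_num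
    have hmin : ∀ z ∈ (paramGroup ha).1, z ≠ 0 → 1 ≤ ‖z‖ := fun z hz hz0 => by
      have := InGroup.rat_le_norm hz ha hx hz0
      rwa [rat_half] at this
    obtain ⟨u, hu, hu0, hu1⟩ := (ha.exists_ne_zero_iff one_pos).2 ⟨hx, rat_half.le⟩
    exact ⟨u, hu, hu1.antisymm (hmin u hu hu0), hmin⟩

lemma span_eq_top_iff {v : Euc 2} {s x y : ℝ} (ha : Admissible v s x y) :
    Submodule.span ℝ ((paramGroup ha).1 : Set (Euc 2)) = ⊤ ↔ y < 1 := by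
  constructor
  · intro h
    by_contra hy
    have hy : y = 1 := by linarith [ha.le_one]
    let L : Submodule ℝ (Euc 2) :=
      { carrier := {z | across v z = 0}
        zero_mem' := across_zero v
        add_mem' := fun {z z'} hz hz' => by
          rw [mem_ofPred_eq] at *
          rw [across_add, hz, hz', add_zero]
        smul_mem' := fun r z hz => by
          rw [mem_ofPred_eq] at *
          rw [across_smul, hz, mul_zero] }
    have hL : Submodule.span ℝ ((paramGroup ha).1 : Set (Euc 2)) ≤ L := by
      refine Submodule.span_le.2 ?_
      rintro z ⟨n, m, h1, -, h3, -⟩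
      change across v z = 0
      simpa [h1 hy] using h3 (by linarith)
    rw [h] at hL
    have h1 : across v (frame v 0 1) = 0 := hL (Submodule.mem_top (x := frame v 0 1))
    rw [across_frame ha.unit] at h1
    exact one_ne_zero h1
  · intro hy
    have hr := rat_nonneg ha.y_nonneg ha.le_one
    obtain ⟨z, z', hz, hz', hne, -, -⟩ := (ha.exists_independent_iff (r := rat y + 1)
      (by linarith)).2 ⟨hy, by linarith⟩
    rw [eq_top_iff]
    rintro w -
    have hw : w = (across w z' / across z z') • z + (across z w / across z z') • z' := by
      ext i
      fin_cases i
      · simp only [Fin.zero_eta, PiLp.add_apply, PiLp.smul_apply, smul_eq_mul]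
        field_simp
        simp only [across]
        ring
      · simp only [Fin.mk_one, PiLp.add_apply, PiLp.smul_apply, smul_eq_mul]
        field_simp
        simp only [across]
        ring
    rw [hw]
    exact add_mem (Submodule.smul_mem _ _ (Submodule.subset_span hz))
      (Submodule.smul_mem _ _ (Submodule.subset_span hz'))

lemma isLattice_paramGroup_iff {v : Euc 2} {s x y : ℝ} (ha : Admissible v s x y) :
    IsLattice (paramGroup ha).1 ↔ 0 < x ∧ y < 1 := by
  rw [IsLattice, span_eq_top_iff]
  refine and_congr_left fun hy => ⟨fun hd => ?_, fun hx => ?_⟩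
  · refine ha.nonneg.lt_of_ne ?_
    rintro rfl
    have hv := norm_eq_one_of ha.unit
    obtain ⟨ε, hε, hball⟩ := Metric.isOpen_iff.1 (isOpen_discrete {(0 : (paramGroup ha).1)}) 0
      (mem_singleton _)
    let w : (paramGroup ha).1 := ⟨(ε / 2) • v, Admissible.smul_mem _⟩
    have hn : ‖(ε / 2) • v‖ = ε / 2 := by
      rw [norm_smul, hv, mul_one, Real.norm_of_nonneg (by linarith)]
    have hw : w ∈ Metric.ball (0 : (paramGroup ha).1) ε := by
      rw [mem_ball_zero_iff]
      change ‖(ε / 2) • v‖ < ε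
      linarith
    have h0 : (ε / 2) • v = 0 := congrArg Subtype.val (hball hw)
    rw [h0, norm_zero] at hn
    linarith
  · have hx1 := ha.le.trans_lt hy
    refine DiscreteTopology.of_forall_le_dist (rat_pos hx hx1) fun z z' hne => ?_
    change rat x ≤ dist z z'
    rw [Subtype.dist_eq, dist_eq_norm]
    exact InGroup.rat_le_norm ((paramGroup ha).1.sub_mem z.2 z'.2) ha hx1
      (sub_ne_zero.2 (Subtype.coe_injective.ne hne))

/-! ### The suspension -/

/-- The length of a shortest vector at height `t` of the suspension, over the shape `c`. -/
def lowLength (c t : ℝ) : ℝ := t - c * min t (1 - t)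

/-- The length of a second shortest vector at height `t` of the suspension, over the shape `c`. -/
def highLength (c t : ℝ) : ℝ := t + c * min t (1 - t)

section Lengths

variable {c t : ℝ}

lemma low_high_bounds (hc : 0 ≤ c) (hc1 : c ≤ 1) (ht : 0 ≤ t) (ht1 : t ≤ 1) :
    0 ≤ lowLength c t ∧ lowLength c t ≤ highLength c t ∧ highLength c t ≤ 1 := by
  have h0 : 0 ≤ min t (1 - t) := le_min ht (by linarith)
  have h1 := min_le_left t (1 - t)
  have h2 := min_le_right t (1 - t)
  unfold lowLength highLength
  refine ⟨?_, ?_, ?_⟩ <;> nlinarith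

lemma lowLength_eq_zero_or (hc : c = 1) : lowLength c t = 0 ∨ highLength c t = 1 := by
  subst hc
  unfold lowLength highLength
  rcases le_total t (1 - t) with h | h
  · left; rw [min_eq_left h]; ring
  · right; rw [min_eq_right h]; ring

lemma lengths_interior (hc : 0 ≤ c) (hc1 : c < 1) (ht : 0 < t) (ht1 : t < 1) :
    0 < lowLength c t ∧ highLength c t < 1 := by
  have h0 : 0 < min t (1 - t) := lt_min ht (by linarith)
  have h1 := min_le_left t (1 - t)
  have h2 := min_le_right t (1 - t)
  unfold lowLength highLength
  constructor <;> nlinarith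

lemma lowLength_lt_highLength (hc : 0 < c) (ht : 0 < t) (ht1 : t < 1) :
    lowLength c t < highLength c t := by
  have h0 : 0 < min t (1 - t) := lt_min ht (by linarith)
  unfold lowLength highLength
  nlinarith

end Lengths

lemma lengths_injective {c c' t t' : ℝ} (hl : lowLength c t = lowLength c' t')
    (hh : highLength c t = highLength c' t') : t = t' ∧ (0 < t → t < 1 → c = c') := by
  unfold lowLength at hl
  unfold highLength at hh
  have ht : t = t' := by linarith
  subst ht
  refine ⟨rfl, fun h0 h1 => ?_⟩
  have h2 : 0 < min t (1 - t) := lt_min h0 (by linarith)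
  exact mul_right_cancel₀ h2.ne' (by linarith)

lemma exists_lengths_eq {x y : ℝ} (hx : 0 ≤ x) (hxy : x ≤ y) (hy : y ≤ 1) :
    ∃ c t, 0 ≤ c ∧ c ≤ 1 ∧ 0 ≤ t ∧ t ≤ 1 ∧ lowLength c t = x ∧ highLength c t = y := by
  have hm : (y - x) / 2 ≤ min ((x + y) / 2) (1 - (x + y) / 2) := le_min (by linarith) (by linarith)
  have hm0 : 0 ≤ min ((x + y) / 2) (1 - (x + y) / 2) := le_trans (by linarith) hm
  have key : (y - x) / 2 / min ((x + y) / 2) (1 - (x + y) / 2) *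
      min ((x + y) / 2) (1 - (x + y) / 2) = (y - x) / 2 := by
    refine div_mul_cancel_of_imp fun h => ?_
    rw [h] at hm
    linarith
  refine ⟨(y - x) / 2 / min ((x + y) / 2) (1 - (x + y) / 2), (x + y) / 2,
    div_nonneg (by linarith) hm0, div_le_one_of_le₀ hm hm0, by linarith, by linarith, ?_, ?_⟩
  · rw [lowLength, key]; ring
  · rw [highLength, key]; ring

/-- Parameters of a subgroup of norm one: the direction of a shortest vector, the twist, and the
compactified length of a second shortest vector. -/
abbrev Shape := Metric.sphere (0 : Euc 2) 1 × Icc (-(1 / 2) : ℝ) (1 / 2) × Icc (0 : ℝ) 1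

lemma unit_of_sphere (v : Metric.sphere (0 : Euc 2) 1) : v.1 0 ^ 2 + v.1 1 ^ 2 = 1 := by
  rw [← norm_sq_eq, mem_sphere_zero_iff_norm.1 v.2, one_pow]

lemma admissible_shape (p : Shape) :
    Admissible p.1 p.2.1 (1 / 2) ((1 + (p.2.2 : ℝ)) / 2) :=
  ⟨unit_of_sphere p.1, p.2.1.2.1, p.2.1.2.2, by norm_num, by linarith [p.2.2.2.1],
    by linarith [p.2.2.2.2]⟩

lemma admissible_suspension (q : Shape × Icc (0 : ℝ) 1) :
    Admissible q.1.1 q.1.2.1 (lowLength q.1.2.2 q.2) (highLength q.1.2.2 q.2) := by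
  obtain ⟨h1, h2, h3⟩ := low_high_bounds q.1.2.2.2.1 q.1.2.2.2.2 q.2.2.1 q.2.2.2
  exact ⟨unit_of_sphere q.1.1, q.1.2.1.2.1, q.1.2.1.2.2, h1, h2, h3⟩

/-- The subgroup of norm one with a given shape. -/
def shapeGroup (p : Shape) : normOne :=
  ⟨paramGroup (admissible_shape p), (mem_normOne_iff _).2 rfl⟩

/-- The closed subgroup at height `q.2` of the suspension, over the shape `q.1`. -/
def suspensionGroup (q : Shape × Icc (0 : ℝ) 1) : ChabautyPoint 2 :=
  paramGroup (admissible_suspension q)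

lemma continuous_shapeGroup : Continuous shapeGroup := by
  refine Continuous.subtype_mk ?_ _
  exact continuous_paramGroup admissible_shape (by fun_prop) (by fun_prop) (by fun_prop)
    (by fun_prop)

lemma continuous_suspensionGroup : Continuous suspensionGroup := by
  refine continuous_paramGroup admissible_suspension (by fun_prop) (by fun_prop) ?_ ?_
  · unfold lowLength; fun_prop
  · unfold highLength; fun_prop

lemma shapeGroup_surjective : Function.Surjective shapeGroup := by
  rintro ⟨Γ, hΓ⟩
  obtain ⟨v, s, x, y, ha, rfl⟩ := exists_paramGroup_eq Γ
  obtain rfl := (mem_normOne_iff ha).1 hΓ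
  let p : Shape := (⟨v, by simp [norm_eq_one_of ha.unit]⟩, ⟨s, ha.neg_half_le, ha.le_half⟩,
    ⟨2 * y - 1, by linarith [ha.le], by linarith [ha.le_one]⟩)
  refine ⟨p, Subtype.ext ((paramGroup_eq_iff (admissible_shape p) ha).2 fun z => ?_)⟩
  have hy : (1 + (p.2.2 : ℝ)) / 2 = y := by
    change (1 + (2 * y - 1)) / 2 = y
    ring
  rw [hy]

lemma suspensionGroup_surjective : Function.Surjective suspensionGroup := by
  intro Γ
  obtain ⟨v, s, x, y, ha, rfl⟩ := exists_paramGroup_eq Γ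
  obtain ⟨c, t, hc, hc1, ht, ht1, rfl, rfl⟩ := exists_lengths_eq ha.nonneg ha.le ha.le_one
  exact ⟨((⟨v, by simp [norm_eq_one_of ha.unit]⟩, ⟨s, ha.neg_half_le, ha.le_half⟩,
    ⟨c, hc, hc1⟩), ⟨t, ht, ht1⟩), rfl⟩

/-- The identifications between shapes are the same at all interior heights. -/
lemma forall_inGroup_shape_iff {v v' : Euc 2} {s s' c t : ℝ} (hc1 : c ≤ 1) (ht : 0 < t)
    (ht1 : t < 1) (h : Admissible v s (1 / 2) ((1 + c) / 2))
    (h' : Admissible v' s' (1 / 2) ((1 + c) / 2))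
    (k : Admissible v s (lowLength c t) (highLength c t))
    (k' : Admissible v' s' (lowLength c t) (highLength c t)) :
    (∀ z, InGroup v s (1 / 2) ((1 + c) / 2) z ↔ InGroup v' s' (1 / 2) ((1 + c) / 2) z) ↔
      ∀ z, InGroup v s (lowLength c t) (highLength c t) z ↔
        InGroup v' s' (lowLength c t) (highLength c t) z := by
  have hc : 0 ≤ c := by linarith [h.le]
  rcases hc.eq_or_lt with rfl | hc0
  · have hr := rat_pos ht ht1
    have e1 : lowLength 0 t = t := by simp [lowLength]
    have e2 : highLength 0 t = t := by simp [highLength]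
    rw [e1, e2, add_zero]
    simp only [inGroup_diagonal_iff ht ht1]
    refine ⟨fun H z => H _, fun H z => ?_⟩
    have := H (rat t • z)
    rwa [inv_smul_smul₀ hr.ne'] at this
  · rw [h.forall_inGroup_iff h' (by linarith),
      k.forall_inGroup_iff k' (lowLength_lt_highLength hc0 ht ht1)]
    refine and_congr_right fun _ => ?_
    rcases hc1.eq_or_lt with e | e
    · have e1 : (1 + c) / 2 = 1 := by linarith
      have := lowLength_eq_zero_or (t := t) e
      tauto
    · obtain ⟨b1, b2⟩ := lengths_interior hc e ht ht1
      have e1 : (1 + c) / 2 ≠ 1 := by linarith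
      have e2 : (1 / 2 : ℝ) ≠ 0 := by norm_num
      simp [b1.ne', b2.ne, e1]

lemma shapeGroup_eq_iff {p p' : Shape} : shapeGroup p = shapeGroup p' ↔
    ∀ z, InGroup p.1 p.2.1 (1 / 2) ((1 + (p.2.2 : ℝ)) / 2) z ↔
      InGroup p'.1 p'.2.1 (1 / 2) ((1 + (p'.2.2 : ℝ)) / 2) z := by
  rw [← paramGroup_eq_iff (admissible_shape p) (admissible_shape p'), Subtype.ext_iff]
  rfl

lemma inGroup_pole {v v' : Euc 2} {s s' x y t : ℝ} (ht : t = 0 ∨ t = 1)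
    (ha : Admissible v s x y) (ha' : Admissible v' s' x y) (hx : x = t) (hy : y = t)
    {z : Euc 2} (h : InGroup v s x y z) : InGroup v' s' x y z := by
  subst hx
  rcases ht with rfl | rfl
  · subst hy
    exact ⟨0, 0, by simp⟩
  · subst hy
    obtain ⟨n, m, h1, h2, h3, h4⟩ := h
    have h3 := h3 one_pos
    have h4 := h4 one_pos
    simp only [h1, h2, Int.cast_zero, zero_mul, add_zero] at h3 h4
    rw [eq_zero_of_along_across ha.unit h4 h3]
    exact inGroup_zero _ _ _ _

lemma lengths_pole {c t : ℝ} (ht : t = 0 ∨ t = 1) : lowLength c t = t ∧ highLength c t = t := by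
  rcases ht with rfl | rfl <;> simp [lowLength, highLength]

lemma suspensionGroup_pole {p p' : Shape} {t : Icc (0 : ℝ) 1} (ht : (t : ℝ) = 0 ∨ (t : ℝ) = 1) :
    suspensionGroup (p, t) = suspensionGroup (p', t) := by
  refine (paramGroup_eq_iff _ _).2 fun z => ?_
  obtain ⟨e1, e2⟩ := lengths_pole (c := p.2.2) ht
  obtain ⟨e1', e2'⟩ := lengths_pole (c := p'.2.2) ht
  have h := admissible_suspension (p, t)
  have h' := admissible_suspension (p', t)
  simp only [e1, e2, e1', e2'] at h h' ⊢
  exact ⟨inGroup_pole ht h h' rfl rfl, inGroup_pole ht h' h rfl rfl⟩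

lemma suspensionGroup_eq_iff {p p' : Shape} {t t' : Icc (0 : ℝ) 1} :
    suspensionGroup (p, t) = suspensionGroup (p', t') ↔
      t = t' ∧ ((t : ℝ) = 0 ∨ (t : ℝ) = 1 ∨ shapeGroup p = shapeGroup p') := by
  have interior : ∀ t : Icc (0 : ℝ) 1, (t : ℝ) ≠ 0 → (t : ℝ) ≠ 1 → (p.2.2 : ℝ) = p'.2.2 →
      (shapeGroup p = shapeGroup p' ↔ suspensionGroup (p, t) = suspensionGroup (p', t)) := by
    intro t h0 h1 hc
    have k := admissible_suspension (p, t)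
    have k' := admissible_suspension (p', t)
    have h := admissible_shape p
    have h' := admissible_shape p'
    rw [shapeGroup_eq_iff, suspensionGroup, suspensionGroup, paramGroup_eq_iff]
    simp only [← hc] at k' h' ⊢
    exact forall_inGroup_shape_iff p.2.2.2.2 (t.2.1.lt_of_ne' h0) (t.2.2.lt_of_ne h1) h h' k k'
  constructor
  · intro h
    obtain ⟨e1, e2⟩ := (admissible_suspension (p, t)).lengths_eq (admissible_suspension (p', t'))
      ((paramGroup_eq_iff _ _).1 h)
    obtain ⟨ht, hc⟩ := lengths_injective e1 e2
    obtain rfl : t = t' := Subtype.ext ht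
    refine ⟨rfl, ?_⟩
    by_cases h0 : (t : ℝ) = 0
    · exact Or.inl h0
    by_cases h1 : (t : ℝ) = 1
    · exact Or.inr (Or.inl h1)
    exact Or.inr (Or.inr ((interior t h0 h1
      (hc (t.2.1.lt_of_ne' h0) (t.2.2.lt_of_ne h1))).2 h))
  · rintro ⟨rfl, h⟩
    by_cases h0 : (t : ℝ) = 0
    · exact suspensionGroup_pole (Or.inl h0)
    by_cases h1 : (t : ℝ) = 1
    · exact suspensionGroup_pole (Or.inr h1)
    have h := (h.resolve_left h0).resolve_left h1
    have hc := ((admissible_shape p).lengths_eq (admissible_shape p') (shapeGroup_eq_iff.1 h)).2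
    exact (interior t h0 h1 (by linarith)).1 h

/-- The map from the suspension to the Chabauty space, before collapsing the ends. -/
def preSuspensionMap (q : normOne × Icc (0 : ℝ) 1) : ChabautyPoint 2 :=
  suspensionGroup (Function.surjInv shapeGroup_surjective q.1, q.2)

lemma preSuspensionMap_shapeGroup (q : Shape × Icc (0 : ℝ) 1) :
    preSuspensionMap (shapeGroup q.1, q.2) = suspensionGroup q :=
  suspensionGroup_eq_iff.2 ⟨rfl, Or.inr (Or.inr (Function.surjInv_eq shapeGroup_surjective _))⟩

lemma preSuspensionMap_eq_iff {q q' : normOne × Icc (0 : ℝ) 1} :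
    preSuspensionMap q = preSuspensionMap q' ↔ suspRel normOne q q' := by
  obtain ⟨Γ, t⟩ := q
  obtain ⟨Γ', t'⟩ := q'
  rw [preSuspensionMap, preSuspensionMap, suspensionGroup_eq_iff,
    Function.surjInv_eq shapeGroup_surjective, Function.surjInv_eq shapeGroup_surjective, suspRel]
  simp only [Prod.mk.injEq, Subtype.ext_iff (a1 := t)]
  constructor
  · rintro ⟨h, h0 | h1 | h2⟩
    · exact Or.inr (Or.inl ⟨h0, h ▸ h0⟩)
    · exact Or.inr (Or.inr ⟨h1, h ▸ h1⟩)
    · exact Or.inl ⟨h2, h⟩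
  · rintro (⟨h1, h2⟩ | ⟨h1, h2⟩ | ⟨h1, h2⟩)
    · exact ⟨h2, Or.inr (Or.inr h1)⟩
    · exact ⟨h1.trans h2.symm, Or.inl h1⟩
    · exact ⟨h1.trans h2.symm, Or.inr (Or.inl h1)⟩

lemma continuous_preSuspensionMap : Continuous preSuspensionMap := by
  have hsurj : Function.Surjective (Prod.map shapeGroup (id : Icc (0 : ℝ) 1 → Icc (0 : ℝ) 1)) :=
    shapeGroup_surjective.prodMap Function.surjective_id
  have hcont : Continuous (Prod.map shapeGroup (id : Icc (0 : ℝ) 1 → Icc (0 : ℝ) 1)) :=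
    continuous_shapeGroup.prodMap continuous_id
  have hq := hcont.isClosedMap.isQuotientMap hcont hsurj
  rw [hq.continuous_iff]
  convert continuous_suspensionGroup using 1
  funext q
  exact preSuspensionMap_shapeGroup q

/-- The map from the suspension of the subgroups of norm one to the Chabauty space. -/
def suspensionMap : Susp normOne → ChabautyPoint 2 :=
  Quot.lift preSuspensionMap fun _ _ h => preSuspensionMap_eq_iff.2 h

lemma continuous_suspensionMap : Continuous suspensionMap :=
  continuous_quot_lift _ continuous_preSuspensionMap

lemma suspensionMap_bijective : Function.Bijective suspensionMap := by
  constructor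
  · rintro ⟨q⟩ ⟨q'⟩ h
    exact Quot.sound (preSuspensionMap_eq_iff.1 h)
  · intro Γ
    obtain ⟨q, rfl⟩ := suspensionGroup_surjective Γ
    exact ⟨Quot.mk _ (shapeGroup q.1, q.2), preSuspensionMap_shapeGroup q⟩

instance compactSpace_normOne : CompactSpace normOne :=
  shapeGroup_surjective.compactSpace continuous_shapeGroup

instance compactSpace_susp : CompactSpace (Susp normOne) :=
  inferInstanceAs (CompactSpace (Quot (suspRel normOne)))

/-- The Chabauty space of the plane is the suspension of the subgroups of norm one. -/
def suspensionHomeomorph : Susp normOne ≃ₜ ChabautyPoint 2 :=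
  Continuous.homeoOfEquivCompactToT2 (f := Equiv.ofBijective _ suspensionMap_bijective)
    continuous_suspensionMap

lemma suspensionHomeomorph_mk (q : Shape × Icc (0 : ℝ) 1) :
    suspensionHomeomorph (Quot.mk _ (shapeGroup q.1, q.2)) = suspensionGroup q :=
  preSuspensionMap_shapeGroup q

lemma shapeGroup_mem_rankOneNormOne_iff (p : Shape) :
    shapeGroup p ∈ rankOneNormOne ↔ (p.2.2 : ℝ) = 1 := by
  have : shapeGroup p ∈ rankOneNormOne ↔ ¬ (1 + (p.2.2 : ℝ)) / 2 < 1 :=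
    not_congr (span_eq_top_iff (admissible_shape p))
  rw [this]
  have := p.2.2.2.2
  constructor <;> intro h <;> linarith

lemma suspensionGroup_mem_latticeSet_iff (q : Shape × Icc (0 : ℝ) 1) :
    suspensionGroup q ∈ latticeSet ↔
      (q.1.2.2 : ℝ) ≠ 1 ∧ (q.2 : ℝ) ≠ 0 ∧ (q.2 : ℝ) ≠ 1 := by
  have h : suspensionGroup q ∈ latticeSet ↔
      0 < lowLength q.1.2.2 q.2 ∧ highLength q.1.2.2 q.2 < 1 :=
    isLattice_paramGroup_iff (admissible_suspension q)
  rw [h]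
  constructor
  · rintro ⟨h1, h2⟩
    refine ⟨fun e => ?_, fun e => ?_, fun e => ?_⟩
    · rcases lowLength_eq_zero_or (t := q.2) e with e | e <;> linarith
    · rw [(lengths_pole (Or.inl e)).1] at h1; linarith
    · rw [(lengths_pole (Or.inr e)).2] at h2; linarith
  · rintro ⟨h1, h2, h3⟩
    exact lengths_interior q.1.2.2.2.1 (q.1.2.2.2.2.lt_of_ne h1) (q.2.2.1.lt_of_ne' h2)
      (q.2.2.2.lt_of_ne h3)

/-- The pair (𝒞(ℝ²), 𝒞(ℝ²) \ ℒ) is homeomorphic to the suspension of the pair (𝒞¹, 𝒵¹). -/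
theorem chabauty_plane_suspension :
    ∃ Φ : ChabautyPoint 2 ≃ₜ Susp normOne,
      Φ '' latticeSetᶜ = suspSet rankOneNormOne := by
  refine ⟨suspensionHomeomorph.symm, ?_⟩
  have hmem : ∀ z, z ∈ suspensionHomeomorph.symm '' latticeSetᶜ ↔
      suspensionHomeomorph z ∉ latticeSet := fun z => by
    rw [Homeomorph.image_symm]
    rfl
  ext z
  rw [hmem]
  constructor
  · obtain ⟨⟨Γ, t⟩⟩ := z
    obtain ⟨p, rfl⟩ := shapeGroup_surjective Γ
    intro h
    have h : suspensionGroup (p, t) ∉ latticeSet := by rwa [← suspensionHomeomorph_mk]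
    rw [suspensionGroup_mem_latticeSet_iff] at h
    by_cases hc : (p.2.2 : ℝ) = 1
    · exact ⟨_, (shapeGroup_mem_rankOneNormOne_iff p).2 hc, t, rfl⟩
    · refine ⟨shapeGroup (p.1, p.2.1, 1), (shapeGroup_mem_rankOneNormOne_iff _).2 rfl, t,
        Quot.sound ?_⟩
      by_cases h0 : (t : ℝ) = 0
      · exact Or.inr (Or.inl ⟨h0, h0⟩)
      · exact Or.inr (Or.inr (by tauto))
  · rintro ⟨Γ, hΓ, t, rfl⟩
    obtain ⟨p, rfl⟩ := shapeGroup_surjective Γ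
    rw [suspensionHomeomorph_mk (p, t), suspensionGroup_mem_latticeSet_iff]
    exact fun h => h.1 ((shapeGroup_mem_rankOneNormOne_iff p).1 hΓ)
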